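/- arXiv:2603.13499 — 5 statements merged into one kernel-verified Lean document; each statement's English description precedes it below -/
import Mathlib

section
/- Let 0 < t_min ≤ 1 ≤ t_max and 0 < x_min ≤ 1 ≤ x_max. Let ℱ be the class of all functions x ↦ E_{t~H}[ t·exp(−t²x²/2) ] as H ranges over probability measures on [t_min, t_max]. Then there is a universal constant C > 0 such that for every ε ∈ (0,1/2), the ε-covering number of ℱ in the sup norm on [x_min, x_max] satisfies log N(ε, ℱ, L_∞([x_min,x_max])) ≤ C · log³( t_max x_max / (ε t_min x_min) ) · log⁴ log( t_max x_max / (ε t_min x_min) ). -/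
open MeasureTheory ProbabilityTheory
open scoped ENNReal NNReal

/-- The standard normal density `φ`. -/
noncomputable def stdNormalPDF (u : ℝ) : ℝ :=
  Real.exp (-u ^ 2 / 2) / Real.sqrt (2 * Real.pi)

/-- The normal scale mixture density `f_{μ,G}`. -/
noncomputable def mixDensity (μ : ℝ) (G : Measure ℝ) (x : ℝ) : ℝ :=
  ∫ σ, (1 / σ) * stdNormalPDF ((x - μ) / σ) ∂G

/-- The squared Hellinger distance between two densities on `ℝ`. -/
noncomputable def hellingerSq (p q : ℝ → ℝ) : ℝ :=
  ∫ x, (Real.sqrt (p x) - Real.sqrt (q x)) ^ 2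

/-- The Hellinger modulus of continuity `ω_{H²,G}(t)` of the location family generated
by `G`, valued in `ℝ≥0∞`. -/
noncomputable def modulusEnn (G : Measure ℝ) (t : ℝ) : ℝ≥0∞ :=
  ⨆ (μ₁ : ℝ) (μ₂ : ℝ) (_ : hellingerSq (mixDensity μ₁ G) (mixDensity μ₂ G) ≤ t),
    ENNReal.ofReal |μ₁ - μ₂|

/-- `G` is a probability measure supported in `[σmin, σmax]`. -/
def IsPriorOn (σmin σmax : ℝ) (G : Measure ℝ) : Prop :=
  IsProbabilityMeasure G ∧ G (Set.Icc σmin σmax)ᶜ = 0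

/-- The mixture log-likelihood of the data `X` at parameters `(μ, G)`. -/
noncomputable def logLik {n : ℕ} (X : Fin n → ℝ) (μ : ℝ) (G : Measure ℝ) : ℝ :=
  ∑ i, Real.log (mixDensity μ G (X i))

/-- `(μh, Gh)` is a joint maximizer of the mixture likelihood over `μ ∈ ℝ` and
probability measures `G` supported in `[σmin, σmax]`; `μh` is then the
empirical Bayes profile MLE. -/
def IsProfileMLE {n : ℕ} (σmin σmax : ℝ) (X : Fin n → ℝ) (μh : ℝ) (Gh : Measure ℝ) : Prop :=
  IsPriorOn σmin σmax Gh ∧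
    ∀ (μ' : ℝ) (G : Measure ℝ), IsPriorOn σmin σmax G → logLik X μ' G ≤ logLik X μh Gh

/-- The empirical distribution `G_n = (1/n) ∑ δ_{σ i}`. -/
noncomputable def empMeasure {n : ℕ} (σ : Fin n → ℝ) : Measure ℝ :=
  (n : ℝ≥0∞)⁻¹ • ∑ i, Measure.dirac (σ i)

/-- The `ε`-covering number of a class `F` of functions under the sup norm on `s`. -/
noncomputable def coveringNum (ε : ℝ) (F : Set (ℝ → ℝ)) (s : Set ℝ) : ℝ≥0∞ :=
  sInf {N : ℝ≥0∞ | ∃ C : Finset (ℝ → ℝ), (C.card : ℝ≥0∞) = N ∧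
    ∀ f ∈ F, ∃ g ∈ C, ∀ x ∈ s, |f x - g x| ≤ ε}

/-- The Hellinger bracketing number `N_{[]}(ε, Pc, H)`: the least number of brackets
`[pᴸ, pᵁ]` of nonnegative functions with `H(pᴸ, pᵁ) ≤ ε` such that every `p ∈ Pc`
satisfies `pᴸ ≤ p ≤ pᵁ` pointwise for some bracket. -/
noncomputable def bracketingNum (ε : ℝ) (Pc : Set (ℝ → ℝ)) : ℝ≥0∞ :=
  sInf {N : ℝ≥0∞ | ∃ B : Finset ((ℝ → ℝ) × (ℝ → ℝ)), (B.card : ℝ≥0∞) = N ∧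
    (∀ b ∈ B, (∀ x, 0 ≤ b.1 x) ∧ hellingerSq b.1 b.2 ≤ ε ^ 2) ∧
    ∀ p ∈ Pc, ∃ b ∈ B, ∀ x, b.1 x ≤ p x ∧ p x ≤ b.2 x}

/-- The local class `Pc(p̄, δ) = {p ∈ Pc : H(p, p̄) ≤ δ}`. -/
def localClass (Pc : Set (ℝ → ℝ)) (pbar : ℝ → ℝ) (δ : ℝ) : Set (ℝ → ℝ) :=
  {p ∈ Pc | hellingerSq p pbar ≤ δ ^ 2}

/-- The class of normal location-scale mixture densities with mixing distribution
supported in `[σmin, σmax]`. -/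
def mixClass (σmin σmax : ℝ) : Set (ℝ → ℝ) :=
  {f | ∃ (μ : ℝ) (G : Measure ℝ), IsPriorOn σmin σmax G ∧ f = mixDensity μ G}

/-- The class of centered normal scale mixture densities with mixing distribution
supported in `[σmin, σmax]`. -/
def mixClass0 (σmin σmax : ℝ) : Set (ℝ → ℝ) :=
  {f | ∃ G : Measure ℝ, IsPriorOn σmin σmax G ∧ f = mixDensity 0 G}

/-- The class of functions `x ↦ E_{t∼H}[t exp(-t²x²/2)]` with `H` a probability measure
on `[tmin, tmax]`. -/
def scaleClass (tmin tmax : ℝ) : Set (ℝ → ℝ) :=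
  {f | ∃ H : Measure ℝ, IsProbabilityMeasure H ∧ H (Set.Icc tmin tmax)ᶜ = 0 ∧
    f = fun x => ∫ t, t * Real.exp (-(t ^ 2 * x ^ 2) / 2) ∂H}

/-!
Cut `(0, tmax]` into the dyadic cells `(b/2, b]`, `b = tmax / 2 ^ j` with `j < K`, where `K` is of
order `log (tmax / ε)`; the part of `H` below `tmax / 2 ^ K` contributes at most `tmax / 2 ^ K`. For
a fixed `x`, either `(b x)² / 2 ≥ 4 K` and the kernel `t exp(-t²x²/2)` is at most `b exp(-K)` on the
whole cell, or its Taylor expansion in `t²x²/2` with `13 K` terms is accurate to `b exp(-K)` and has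
coefficients of total size at most `b exp(4 K)`. Hence `13 K²` normalised moments in `[0, 1]`, each
known to precision `exp(-5 K)`, determine the mixture up to `O(tmax / 2 ^ K)`, uniformly over all
real `x`: the covering entropy is `O(K³)`, whatever the range of `x`.
-/

section

open Real Set
open scoped Nat

section Covering

variable {β : Type*} {Φ : β → ℝ → ℝ} {P : Set β} {s : Set ℝ} {ε : ℝ}

lemma coveringNum_image_le_card {γ : Type*} [Fintype γ] (code : β → γ)
    (hcode : ∀ b ∈ P, ∀ b' ∈ P, code b = code b' → ∀ x ∈ s, |Φ b x - Φ b' x| ≤ ε) :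
    coveringNum ε (Φ '' P) s ≤ Fintype.card γ := by
  classical
  obtain ⟨R, hRP, hR⟩ := exists_subset_bijOn P code
  have hRfin : R.Finite := .of_injOn (mapsTo_univ code R) hR.injOn finite_univ
  refine le_trans (sInf_le ⟨hRfin.toFinset.image Φ, rfl, ?_⟩) ?_
  · rintro _ ⟨b, hb, rfl⟩
    obtain ⟨r, hr, hrb⟩ := hR.surjOn (mem_image_of_mem code hb)
    exact ⟨Φ r, Finset.mem_image_of_mem Φ (hRfin.mem_toFinset.2 hr),
      hcode b hb r (hRP hr) hrb.symm⟩
  · have hcard : hRfin.toFinset.card ≤ Fintype.card γ :=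
      Finset.card_le_card_of_injOn code (fun _ _ => Finset.mem_univ _)
        (by simpa only [Finite.coe_toFinset] using hR.injOn)
    exact_mod_cast Finset.card_image_le.trans hcard

lemma abs_sub_le_one_div_of_natFloor_mul_eq {u v q : ℝ} (hu : 0 ≤ u) (hv : 0 ≤ v) (hq : 0 < q)
    (h : ⌊u * q⌋₊ = ⌊v * q⌋₊) : |u - v| ≤ 1 / q := by
  have hfloor : ⌊u * q⌋ = ⌊v * q⌋ := by
    rw [← Int.natCast_floor_eq_floor (by positivity), h, Int.natCast_floor_eq_floor (by positivity)]
  calc |u - v| = |u * q - v * q| / q := by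
        rw [← sub_mul, abs_mul, abs_of_pos hq, mul_div_cancel_right₀ _ hq.ne']
    _ ≤ 1 / q := by
        gcongr
        exact (Int.abs_sub_lt_one_of_floor_eq_floor hfloor).le

lemma coveringNum_image_le_pow_card {ι : Type*} [Fintype ι] (v : β → ι → ℝ) {q : ℕ} (hq : 0 < q)
    (hv : ∀ b ∈ P, ∀ i, v b i ∈ Icc 0 1)
    (hclose : ∀ b ∈ P, ∀ b' ∈ P, (∀ i, |v b i - v b' i| ≤ 1 / q) →
      ∀ x ∈ s, |Φ b x - Φ b' x| ≤ ε) :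
    coveringNum ε (Φ '' P) s ≤ ((q + 1) ^ Fintype.card ι : ℕ) := by
  classical
  have hfloor {b : β} (hb : b ∈ P) (i : ι) : ⌊v b i * q⌋₊ < q + 1 :=
    Nat.lt_succ_of_le <| Nat.floor_le_of_le <|
      mul_le_of_le_one_left q.cast_nonneg (hv b hb i).2
  have hcover := coveringNum_image_le_card (Φ := Φ) (P := P) (s := s) (ε := ε)
    (fun b i => Fin.ofNat (q + 1) ⌊v b i * q⌋₊) fun b hb b' hb' hbb' =>
      hclose b hb b' hb' fun i => ?_
  · simpa using hcover
  · have hmod : ⌊v b i * q⌋₊ % (q + 1) = ⌊v b' i * q⌋₊ % (q + 1) :=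
      congrArg Fin.val (congrFun hbb' i)
    rw [Nat.mod_eq_of_lt (hfloor hb i), Nat.mod_eq_of_lt (hfloor hb' i)] at hmod
    exact abs_sub_le_one_div_of_natFloor_mul_eq (hv b hb i).1 (hv b' hb' i).1
      (by exact_mod_cast hq) hmod

end Covering

section ExpTaylor

lemma exp_sub_sum_range_le {z : ℝ} (hz : 0 ≤ z) (m : ℕ) :
    exp z - ∑ k ∈ Finset.range m, z ^ k / k ! ≤ exp (3 * z - m) := by
  have hexp (w : ℝ) : HasSum (fun k : ℕ => w ^ k / k !) (exp w) := by
    rw [exp_eq_exp_ℝ]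
    exact NormedSpace.expSeries_div_hasSum_exp w
  have hhead : HasSum (fun k => if k ∈ Finset.range m then z ^ k / k ! else 0)
      (∑ k ∈ Finset.range m, z ^ k / k !) := by
    rw [← Finset.sum_congr rfl fun k hk => if_pos hk]
    exact hasSum_sum_of_ne_finset_zero fun k hk => if_neg hk
  have hterm (k : ℕ) : z ^ k / k ! ≤ (if k ∈ Finset.range m then z ^ k / k ! else 0) +
      exp (-m) * ((3 * z) ^ k / k !) := by
    split_ifs with hk
    · exact le_add_of_nonneg_right (by positivity)
    · have hone : 1 ≤ exp (-m) * 3 ^ k := by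
        rw [exp_neg, one_le_inv_mul₀ (exp_pos _), ← exp_one_pow]
        calc exp 1 ^ m ≤ 3 ^ m := by gcongr; exact exp_one_lt_three.le
          _ ≤ 3 ^ k := by gcongr; exacts [by norm_num, by simpa using hk]
      calc z ^ k / k ! ≤ exp (-m) * 3 ^ k * (z ^ k / k !) :=
            le_mul_of_one_le_left (by positivity) hone
        _ = 0 + exp (-m) * ((3 * z) ^ k / k !) := by rw [mul_pow]; ring
  have hle := hasSum_le hterm (hexp z) (hhead.add ((hexp (3 * z)).mul_left (exp (-m))))
  rwa [← exp_add, neg_add_eq_sub, ← sub_le_iff_le_add'] at hle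

lemma abs_exp_sub_sum_range_le (x : ℝ) (m : ℕ) :
    |exp x - ∑ k ∈ Finset.range m, x ^ k / k !| ≤ exp (3 * |x| - m) := by
  have htail : |exp x - ∑ k ∈ Finset.range m, x ^ k / k !| ≤
      exp |x| - ∑ k ∈ Finset.range m, |x| ^ k / k ! := by
    have hcomplex := Complex.norm_exp_sub_sum_le_exp_norm_sub_sum x m
    rw [Complex.norm_real, norm_eq_abs] at hcomplex
    exact_mod_cast hcomplex
  exact htail.trans (exp_sub_sum_range_le (abs_nonneg x) m)

end ExpTaylor

section SetIntegral

variable {α : Type*} [MeasurableSpace α] {μ ν : Measure α} {s : Set α}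

lemma setIntegral_mem_Icc_zero [IsProbabilityMeasure μ] (hs : MeasurableSet s) {f : α → ℝ} {c : ℝ}
    (hc : 0 ≤ c) (hf : ∀ t ∈ s, f t ∈ Icc 0 c) : ∫ t in s, f t ∂μ ∈ Icc 0 c := by
  refine ⟨setIntegral_nonneg hs fun t ht => (hf t ht).1, (le_abs_self _).trans ?_⟩
  calc |∫ t in s, f t ∂μ| ≤ c * μ.real s :=
        norm_setIntegral_le_of_norm_le_const (measure_lt_top μ s) fun t ht =>
          (norm_of_nonneg (hf t ht).1).trans_le (hf t ht).2
    _ ≤ c := mul_le_of_le_one_right hc measureReal_le_one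

variable {ι : Type*} {I : Finset ι} {c : ι → ℝ} {p : ι → α → ℝ} {g : α → ℝ} {η δ : ℝ}

lemma abs_setIntegral_sub_sum_mul_le [IsProbabilityMeasure μ] (hg : IntegrableOn g s μ)
    (hp : ∀ i ∈ I, IntegrableOn (p i) s μ) (hη : 0 ≤ η)
    (happrox : ∀ t ∈ s, |g t - ∑ i ∈ I, c i * p i t| ≤ η) :
    |∫ t in s, g t ∂μ - ∑ i ∈ I, c i * ∫ t in s, p i t ∂μ| ≤ η := by
  have hcp : ∀ i ∈ I, IntegrableOn (fun t => c i * p i t) s μ := fun i hi => (hp i hi).const_mul _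
  simp_rw [← integral_const_mul]
  rw [← integral_finsetSum I hcp, ← integral_sub hg (integrable_finsetSum I hcp),
    ← norm_eq_abs]
  calc ‖∫ t in s, (g t - ∑ i ∈ I, c i * p i t) ∂μ‖ ≤ η * μ.real s :=
        norm_setIntegral_le_of_norm_le_const (measure_lt_top μ s) happrox
    _ ≤ η := mul_le_of_le_one_right hη measureReal_le_one

lemma abs_setIntegral_sub_setIntegral_le [IsProbabilityMeasure μ] [IsProbabilityMeasure ν]
    (hgμ : IntegrableOn g s μ) (hgν : IntegrableOn g s ν)
    (hpμ : ∀ i ∈ I, IntegrableOn (p i) s μ) (hpν : ∀ i ∈ I, IntegrableOn (p i) s ν)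
    (hη : 0 ≤ η) (happrox : ∀ t ∈ s, |g t - ∑ i ∈ I, c i * p i t| ≤ η)
    (hclose : ∀ i ∈ I, |∫ t in s, p i t ∂μ - ∫ t in s, p i t ∂ν| ≤ δ) :
    |∫ t in s, g t ∂μ - ∫ t in s, g t ∂ν| ≤ 2 * η + (∑ i ∈ I, |c i|) * δ := by
  have hμ := abs_setIntegral_sub_sum_mul_le hgμ hpμ hη happrox
  have hν := abs_setIntegral_sub_sum_mul_le hgν hpν hη happrox
  have hsum : |∑ i ∈ I, c i * ∫ t in s, p i t ∂μ - ∑ i ∈ I, c i * ∫ t in s, p i t ∂ν| ≤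
      (∑ i ∈ I, |c i|) * δ := by
    rw [← Finset.sum_sub_distrib, Finset.sum_mul]
    refine (Finset.abs_sum_le_sum_abs _ _).trans (Finset.sum_le_sum fun i hi => ?_)
    rw [← mul_sub, abs_mul]
    gcongr
    exact hclose i hi
  rw [abs_le] at hμ hν hsum ⊢
  constructor <;> linarith

lemma setIntegral_Icc_eq_sum_setIntegral_Ioc {E : Type*} [NormedAddCommGroup E] [NormedSpace ℝ E]
    {μ : Measure ℝ} {f : ℝ → E} {a : ℝ} {b : ℕ → ℝ} (hb : Antitone b) (hab : ∀ n, a ≤ b n)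
    (hf : IntegrableOn f (Icc a (b 0)) μ) (n : ℕ) :
    ∫ t in Icc a (b 0), f t ∂μ =
      ∑ j ∈ Finset.range n, ∫ t in Ioc (b (j + 1)) (b j), f t ∂μ + ∫ t in Icc a (b n), f t ∂μ := by
  induction n with
  | zero => simp
  | succ n ih =>
    have hfn : IntegrableOn f (Icc a (b n)) μ := hf.mono_set (Icc_subset_Icc_right (hb n.zero_le))
    have hunion : Icc a (b (n + 1)) ∪ Ioc (b (n + 1)) (b n) = Icc a (b n) :=
      Icc_union_Ioc_eq_Icc (hab _) (hb n.le_succ)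
    have hdisj : Disjoint (Icc a (b (n + 1))) (Ioc (b (n + 1)) (b n)) :=
      disjoint_left.2 fun t ht ht' => ht'.1.not_ge ht.2
    rw [ih, Finset.sum_range_succ, add_assoc, ← hunion, setIntegral_union hdisj measurableSet_Ioc
      (hfn.mono_set (hunion ▸ subset_union_left)) (hfn.mono_set (hunion ▸ subset_union_right)),
      add_comm (∫ t in Icc a (b (n + 1)), f t ∂μ)]

end SetIntegral

section Prior

variable {a b : ℝ} {H : Measure ℝ}

lemma IsPriorOn.ae_mem (hH : IsPriorOn a b H) : ∀ᵐ t ∂H, t ∈ Icc a b := hH.2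

lemma IsPriorOn.setIntegral_Icc {E : Type*} [NormedAddCommGroup E] [NormedSpace ℝ E] {a' : ℝ}
    (hH : IsPriorOn a b H) (ha : a' ≤ a) (f : ℝ → E) :
    ∫ t in Icc a' b, f t ∂H = ∫ t, f t ∂H := by
  rw [Measure.restrict_eq_self_of_ae_mem]
  filter_upwards [hH.ae_mem] with t ht using Icc_subset_Icc_left ha ht

lemma IsPriorOn.integrable {E : Type*} [NormedAddCommGroup E] (hH : IsPriorOn a b H) {f : ℝ → E}
    (hf : Continuous f) : Integrable f H := by
  have := hH.1
  rw [← Measure.restrict_eq_self_of_ae_mem hH.ae_mem]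
  exact hf.integrableOn_Icc

end Prior

section ScaleKernel

/-- The kernel `t exp(-t²x²/2)`, whose mixtures over `t` are the members of `scaleClass`. It is
curried as a function of the mixing variable `t`. -/
noncomputable def scaleKernel (x t : ℝ) : ℝ :=
  t * exp (-(t ^ 2 * x ^ 2) / 2)

lemma scaleClass_eq_image (tmin tmax : ℝ) :
    scaleClass tmin tmax =
      (fun H x => ∫ t, scaleKernel x t ∂H) '' {H : Measure ℝ | IsPriorOn tmin tmax H} := by
  ext f
  constructor
  · rintro ⟨H, hprob, hsupp, rfl⟩
    exact ⟨H, ⟨hprob, hsupp⟩, rfl⟩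
  · rintro ⟨H, hH, rfl⟩
    exact ⟨H, hH.1, hH.2, rfl⟩

variable {x t b K : ℝ}

lemma continuous_scaleKernel (x : ℝ) : Continuous (scaleKernel x) := by
  unfold scaleKernel
  fun_prop

lemma scaleKernel_mem_Icc (ht : t ∈ Icc 0 b) (hK : K ≤ t ^ 2 * x ^ 2 / 2) :
    scaleKernel x t ∈ Icc 0 (b * exp (-K)) := by
  obtain ⟨ht0, htb⟩ := ht
  refine ⟨mul_nonneg ht0 (exp_pos _).le, ?_⟩
  unfold scaleKernel
  rw [neg_div]
  exact mul_le_mul htb (exp_le_exp.2 (neg_le_neg hK)) (exp_pos _).le (ht0.trans htb)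

lemma hasDerivAt_scaleKernel (x t : ℝ) :
    HasDerivAt (scaleKernel x) ((1 - t ^ 2 * x ^ 2) * exp (-(t ^ 2 * x ^ 2) / 2)) t := by
  have hexponent : HasDerivAt (fun t : ℝ => -(t ^ 2 * x ^ 2) / 2) (-(t * x ^ 2)) t := by
    refine (((hasDerivAt_pow 2 t).mul_const (x ^ 2)).neg.div_const 2).congr_deriv ?_
    push_cast
    ring
  refine ((hasDerivAt_id t).mul hexponent.exp).congr_deriv ?_
  simp only [id_eq]
  ring

lemma lipschitzWith_scaleKernel (x : ℝ) : LipschitzWith 1 (scaleKernel x) := by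
  refine lipschitzWith_of_nnnorm_deriv_le
    (fun t => (hasDerivAt_scaleKernel x t).differentiableAt) fun t => ?_
  rw [(hasDerivAt_scaleKernel x t).deriv, ← NNReal.coe_le_coe, coe_nnnorm, NNReal.coe_one,
    norm_mul, norm_of_nonneg (exp_pos _).le, norm_eq_abs]
  have hu : 0 ≤ t ^ 2 * x ^ 2 := by positivity
  generalize t ^ 2 * x ^ 2 = u at hu ⊢
  have hquad : |1 - u| ≤ exp (u / 2) := by
    have := quadratic_le_exp_of_nonneg (x := u / 2) (by positivity)
    rw [abs_le]
    constructor <;> nlinarith [sq_nonneg (u - 2)]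
  calc |1 - u| * exp (-u / 2) ≤ exp (u / 2) * exp (-u / 2) := by gcongr
    _ = 1 := by rw [neg_div, exp_neg, mul_inv_cancel₀ (exp_pos _).ne']

lemma abs_scaleKernel_sub_sum_le (x : ℝ) (hb : 0 < b) (ht : t ∈ Icc 0 b) (m : ℕ) :
    |scaleKernel x t - ∑ k ∈ Finset.range m,
        b * ((-((b * x) ^ 2 / 2)) ^ k / k !) * (t / b) ^ (2 * k + 1)| ≤
      b * exp (3 * ((b * x) ^ 2 / 2) - m) := by
  obtain ⟨ht0, htb⟩ := ht
  have hterm (k : ℕ) : b * ((-((b * x) ^ 2 / 2)) ^ k / k !) * (t / b) ^ (2 * k + 1) =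
      t * ((-(t ^ 2 * x ^ 2) / 2) ^ k / k !) := by
    have hbase : -(t ^ 2 * x ^ 2) / 2 = -((b * x) ^ 2 / 2) * (t / b) ^ 2 := by field_simp
    rw [hbase, mul_pow (-((b * x) ^ 2 / 2)), ← pow_mul, pow_succ (t / b)]
    linear_combination (-((b * x) ^ 2 / 2)) ^ k / k ! * (t / b) ^ (2 * k) *
      mul_div_cancel₀ t hb.ne'
  simp_rw [hterm]
  rw [scaleKernel, ← Finset.mul_sum, ← mul_sub, abs_mul, abs_of_nonneg ht0]
  have hexponent : |-(t ^ 2 * x ^ 2) / 2| ≤ (b * x) ^ 2 / 2 := by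
    rw [neg_div, abs_neg, abs_of_nonneg (by positivity), mul_pow]
    gcongr
  calc t * |exp (-(t ^ 2 * x ^ 2) / 2) - ∑ k ∈ Finset.range m, (-(t ^ 2 * x ^ 2) / 2) ^ k / k !|
      ≤ b * exp (3 * |-(t ^ 2 * x ^ 2) / 2| - m) := by
        gcongr
        exact abs_exp_sub_sum_range_le _ m
    _ ≤ b * exp (3 * ((b * x) ^ 2 / 2) - m) := by gcongr

end ScaleKernel

section Cell

/-- The moment of order `2k+1` of the part of `H` lying in the dyadic cell `(b/2, b]`, rescaled by
`b` so that it lies in `[0, 1]`. Only odd orders occur in the Taylor expansion of `scaleKernel`. -/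
noncomputable def cellMoment (H : Measure ℝ) (b : ℝ) (k : ℕ) : ℝ :=
  ∫ t in Ioc (b / 2) b, (t / b) ^ (2 * k + 1) ∂H

variable {H H' : Measure ℝ} [IsProbabilityMeasure H] [IsProbabilityMeasure H'] {b x K δ : ℝ}

lemma cellMoment_mem_Icc (hb : 0 < b) (k : ℕ) : cellMoment H b k ∈ Icc 0 1 := by
  refine setIntegral_mem_Icc_zero measurableSet_Ioc zero_le_one fun t ⟨hbt, htb⟩ => ?_
  have ht : 0 ≤ t / b := div_nonneg (by linarith) hb.le
  exact ⟨pow_nonneg ht _, pow_le_one₀ ht ((div_le_one hb).2 htb)⟩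

lemma setIntegral_cell_scaleKernel_mem_Icc (hb : 0 < b) (hx : 4 * K ≤ (b * x) ^ 2 / 2) :
    ∫ t in Ioc (b / 2) b, scaleKernel x t ∂H ∈ Icc 0 (b * exp (-K)) := by
  refine setIntegral_mem_Icc_zero measurableSet_Ioc (by positivity) fun t ⟨hbt, htb⟩ => ?_
  have hbtx : (b / 2) ^ 2 * x ^ 2 ≤ t ^ 2 * x ^ 2 := by gcongr
  exact scaleKernel_mem_Icc ⟨by linarith, htb⟩ (by linarith)

lemma abs_setIntegral_cell_sub_le_of_le (hb : 0 < b) (hx : (b * x) ^ 2 / 2 ≤ 4 * K) {m : ℕ}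
    (hδ : 0 ≤ δ) (hmom : ∀ k < m, |cellMoment H b k - cellMoment H' b k| ≤ δ) :
    |∫ t in Ioc (b / 2) b, scaleKernel x t ∂H - ∫ t in Ioc (b / 2) b, scaleKernel x t ∂H'| ≤
      b * (2 * exp (12 * K - m) + exp (4 * K) * δ) := by
  have hkernel := continuous_scaleKernel x
  have hpow (k : ℕ) : Continuous fun t : ℝ => (t / b) ^ (2 * k + 1) := by fun_prop
  have hcoeff : ∑ k ∈ Finset.range m, |b * ((-((b * x) ^ 2 / 2)) ^ k / k !)| ≤ b * exp (4 * K) := by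
    have hw : 0 ≤ (b * x) ^ 2 / 2 := by positivity
    simp_rw [abs_mul, abs_div, abs_pow, abs_neg, abs_of_pos hb, abs_of_nonneg hw, Nat.abs_cast]
    rw [← Finset.mul_sum]
    gcongr
    exact (sum_le_exp_of_nonneg hw m).trans (exp_le_exp.2 hx)
  calc |∫ t in Ioc (b / 2) b, scaleKernel x t ∂H - ∫ t in Ioc (b / 2) b, scaleKernel x t ∂H'|
      ≤ 2 * (b * exp (3 * ((b * x) ^ 2 / 2) - m)) +
          (∑ k ∈ Finset.range m, |b * ((-((b * x) ^ 2 / 2)) ^ k / k !)|) * δ :=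
        abs_setIntegral_sub_setIntegral_le hkernel.integrableOn_Ioc hkernel.integrableOn_Ioc
          (fun k _ => (hpow k).integrableOn_Ioc) (fun k _ => (hpow k).integrableOn_Ioc)
          (by positivity)
          (fun t ⟨hbt, htb⟩ => abs_scaleKernel_sub_sum_le x hb ⟨by linarith, htb⟩ m)
          fun k hk => hmom k (Finset.mem_range.1 hk)
    _ ≤ 2 * (b * exp (3 * (4 * K) - m)) + b * exp (4 * K) * δ := by gcongr
    _ = b * (2 * exp (12 * K - m) + exp (4 * K) * δ) := by ring_nf

lemma abs_setIntegral_cell_sub_le (hb : 0 < b) (x : ℝ) (K : ℕ)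
    (hmom : ∀ k < 13 * K, |cellMoment H b k - cellMoment H' b k| ≤ exp (-(5 * K))) :
    |∫ t in Ioc (b / 2) b, scaleKernel x t ∂H - ∫ t in Ioc (b / 2) b, scaleKernel x t ∂H'| ≤
      3 * b * exp (-K) := by
  rcases le_total (4 * (K : ℝ)) ((b * x) ^ 2 / 2) with hx | hx
  · have hH := setIntegral_cell_scaleKernel_mem_Icc (H := H) hb hx
    have hH' := setIntegral_cell_scaleKernel_mem_Icc (H := H') hb hx
    calc _ ≤ b * exp (-K) := abs_sub_le_of_nonneg_of_le hH.1 hH.2 hH'.1 hH'.2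
      _ ≤ 3 * b * exp (-K) := by gcongr; linarith
  · calc _ ≤ b * (2 * exp (12 * K - (13 * K : ℕ)) + exp (4 * K) * exp (-(5 * K))) :=
        abs_setIntegral_cell_sub_le_of_le hb hx (exp_pos _).le hmom
      _ = b * (2 * exp (-K) + exp (-K)) := by
        rw [← exp_add]
        push_cast
        ring_nf
      _ = 3 * b * exp (-K) := by ring

end Cell

section Entropy

variable {tmin tmax ε : ℝ}

lemma IsPriorOn.integral_scaleKernel_eq_sum {H : Measure ℝ} (hH : IsPriorOn tmin tmax H)
    (hmin : 0 ≤ tmin) (hmax : 0 ≤ tmax) (x : ℝ) (n : ℕ) :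
    ∫ t, scaleKernel x t ∂H =
      ∑ j ∈ Finset.range n, ∫ t in Ioc (tmax / 2 ^ j / 2) (tmax / 2 ^ j), scaleKernel x t ∂H +
        ∫ t in Icc 0 (tmax / 2 ^ n), scaleKernel x t ∂H := by
  have := hH.1
  have hanti : Antitone fun j : ℕ => tmax / 2 ^ j := fun i j hij => by
    dsimp only
    gcongr
    norm_num
  have hsum := setIntegral_Icc_eq_sum_setIntegral_Ioc (a := 0) (μ := H) hanti
    (fun j => by positivity) (continuous_scaleKernel x).integrableOn_Icc n
  simpa only [pow_zero, div_one, hH.setIntegral_Icc hmin, pow_succ, ← div_div] using hsum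

lemma abs_integral_scaleKernel_sub_le {H H' : Measure ℝ} (hH : IsPriorOn tmin tmax H)
    (hH' : IsPriorOn tmin tmax H') (hmin : 0 ≤ tmin) (hmax : 0 < tmax) (x : ℝ) (K : ℕ)
    (hmom : ∀ j < K, ∀ k < 13 * K,
      |cellMoment H (tmax / 2 ^ j) k - cellMoment H' (tmax / 2 ^ j) k| ≤ exp (-(5 * K))) :
    |∫ t, scaleKernel x t ∂H - ∫ t, scaleKernel x t ∂H'| ≤ 7 * tmax / 2 ^ K := by
  have := hH.1
  have := hH'.1
  set cell : ℕ → Set ℝ := fun j => Ioc (tmax / 2 ^ j / 2) (tmax / 2 ^ j)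
  have hcells : ∑ j ∈ Finset.range K,
      |∫ t in cell j, scaleKernel x t ∂H - ∫ t in cell j, scaleKernel x t ∂H'| ≤
        6 * tmax * exp (-K) :=
    calc _ ≤ ∑ j ∈ Finset.range K, 3 * (tmax / 2 ^ j) * exp (-K) :=
          Finset.sum_le_sum fun j hj => abs_setIntegral_cell_sub_le (by positivity) x K
            (hmom j (Finset.mem_range.1 hj))
      _ = 3 * tmax * exp (-K) * ∑ j ∈ Finset.range K, (1 / 2) ^ j := by
          rw [Finset.mul_sum]
          refine Finset.sum_congr rfl fun j _ => ?_
          rw [one_div_pow]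
          ring
      _ ≤ 3 * tmax * exp (-K) * 2 := by
          gcongr
          exact sum_geometric_two_le K
      _ = 6 * tmax * exp (-K) := by ring
  have htail {G : Measure ℝ} [IsProbabilityMeasure G] :
      ∫ t in Icc 0 (tmax / 2 ^ K), scaleKernel x t ∂G ∈ Icc 0 (tmax / 2 ^ K) :=
    setIntegral_mem_Icc_zero measurableSet_Icc (by positivity) fun t ht => by
      simpa only [neg_zero, exp_zero, mul_one] using
        scaleKernel_mem_Icc (x := x) (K := 0) ht (by positivity)
  have hexp : exp (-K) ≤ 1 / 2 ^ K := by
    rw [exp_neg, ← exp_one_pow, one_div]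
    gcongr
    exact exp_one_gt_two.le
  rw [hH.integral_scaleKernel_eq_sum hmin hmax.le x K,
    hH'.integral_scaleKernel_eq_sum hmin hmax.le x K, add_sub_add_comm, ← Finset.sum_sub_distrib]
  calc _ ≤ 6 * tmax * exp (-K) + tmax / 2 ^ K :=
        (abs_add_le _ _).trans <| add_le_add ((Finset.abs_sum_le_sum_abs _ _).trans hcells) <|
          abs_sub_le_of_nonneg_of_le htail.1 htail.2 htail.1 htail.2
    _ ≤ 6 * tmax * (1 / 2 ^ K) + tmax / 2 ^ K := by gcongr
    _ = 7 * tmax / 2 ^ K := by ring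

lemma coveringNum_scaleClass_le_pow (hmin : 0 ≤ tmin) (hmax : 0 < tmax) (s : Set ℝ) {K : ℕ}
    (hK : 7 * tmax ≤ ε * 2 ^ K) :
    coveringNum ε (scaleClass tmin tmax) s ≤ ((3 ^ (5 * K) + 1) ^ (13 * K ^ 2) : ℕ) := by
  have hresolution : 1 / ((3 ^ (5 * K) : ℕ) : ℝ) ≤ exp (-(5 * K)) := by
    rw [exp_neg, one_div]
    gcongr
    calc exp (5 * K) = exp 1 ^ (5 * K) := by rw [exp_one_pow]; push_cast; rfl
      _ ≤ ((3 ^ (5 * K) : ℕ) : ℝ) := by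
        push_cast
        gcongr
        exact exp_one_lt_three.le
  have hcover := coveringNum_image_le_pow_card (ι := Fin K × Fin (13 * K))
    (Φ := fun (H : Measure ℝ) x => ∫ t, scaleKernel x t ∂H) (P := {H | IsPriorOn tmin tmax H})
    (s := s) (ε := ε) (fun H i => cellMoment H (tmax / 2 ^ (i.1 : ℕ)) i.2)
    (q := 3 ^ (5 * K)) (by positivity)
    (fun H hH i => by
      have := hH.1
      exact cellMoment_mem_Icc (by positivity) _)
    fun H hH H' hH' hclose x _ =>
      (abs_integral_scaleKernel_sub_le hH hH' hmin hmax x K fun j hj k hk =>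
        (hclose (⟨j, hj⟩, ⟨k, hk⟩)).trans hresolution).trans
        ((div_le_iff₀ (by positivity)).2 hK)
  rw [scaleClass_eq_image]
  convert hcover using 3
  rw [Fintype.card_prod, Fintype.card_fin, Fintype.card_fin]
  ring

lemma coveringNum_scaleClass_le_exp (hmin : 0 ≤ tmin) (hmax : 0 < tmax) (s : Set ℝ) {L : ℝ}
    (hL : 1 ≤ L) (hε : tmax ≤ ε * exp L) :
    coveringNum ε (scaleClass tmin tmax) s ≤ ENNReal.ofReal (exp (130000 * L ^ 3)) := by
  set p : ℕ := ⌈L⌉₊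
  have hLp : L ≤ p := Nat.le_ceil L
  have hp : 1 ≤ p := Nat.one_le_ceil_iff.2 (by linarith)
  have hpL : (p : ℝ) ≤ 2 * L := by linarith [Nat.ceil_lt_add_one (zero_le_one.trans hL)]
  have hε0 : 0 < ε := pos_of_mul_pos_left (hmax.trans_le hε) (exp_pos L).le
  have hK : 7 * tmax ≤ ε * 2 ^ (5 * p) := by
    have hexp : exp L ≤ 3 ^ p := by
      calc exp L ≤ exp p := exp_le_exp.2 hLp
        _ = exp 1 ^ p := (exp_one_pow p).symm
        _ ≤ 3 ^ p := by gcongr; exact exp_one_lt_three.le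
    have hseven : (7 : ℝ) ≤ 9 ^ p :=
      (by norm_num : (7 : ℝ) ≤ 9).trans (le_self_pow₀ (by norm_num) (by omega))
    calc 7 * tmax ≤ 9 ^ p * (ε * 3 ^ p) := by gcongr; exact hε.trans (by gcongr)
      _ = ε * 27 ^ p := by rw [mul_left_comm, ← mul_pow]; norm_num
      _ ≤ ε * 32 ^ p := by gcongr; norm_num
      _ = ε * 2 ^ (5 * p) := by rw [pow_mul]; norm_num
  have hbase : (3 : ℝ) ^ (5 * (5 * p)) + 1 ≤ exp (50 * p) :=
    calc (3 : ℝ) ^ (5 * (5 * p)) + 1 ≤ (3 + 1) ^ (5 * (5 * p)) := by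
          simpa only [one_pow] using
            pow_add_pow_le (x := (3 : ℝ)) (by norm_num) zero_le_one (by omega : 5 * (5 * p) ≠ 0)
      _ = 2 ^ (50 * p) := by
          rw [show 50 * p = 2 * (5 * (5 * p)) by ring, pow_mul 2 2]
          norm_num
      _ ≤ exp 1 ^ (50 * p) := by
          gcongr
          exact exp_one_gt_two.le
      _ = exp (50 * p) := by
          rw [exp_one_pow]
          push_cast
          rfl
  refine (coveringNum_scaleClass_le_pow hmin hmax s hK).trans ?_
  rw [← ENNReal.ofReal_natCast]
  refine ENNReal.ofReal_le_ofReal ?_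
  push_cast
  calc ((3 : ℝ) ^ (5 * (5 * p)) + 1) ^ (13 * (5 * p) ^ 2) ≤ exp (50 * p) ^ (13 * (5 * p) ^ 2) := by
        gcongr
    _ = exp (16250 * p ^ 3) := by
        rw [← exp_nat_mul]
        push_cast
        ring_nf
    _ ≤ exp (16250 * (2 * L) ^ 3) := by gcongr
    _ = exp (130000 * L ^ 3) := by ring_nf

lemma coveringNum_scaleClass_le_one (s : Set ℝ) (hε : tmax - tmin ≤ 2 * ε) :
    coveringNum ε (scaleClass tmin tmax) s ≤ 1 := by
  set c := (tmin + tmax) / 2 with hc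
  refine sInf_le ⟨{fun x => scaleKernel x c}, by simp, ?_⟩
  rw [scaleClass_eq_image]
  rintro _ ⟨H, hH, rfl⟩
  have := hH.1
  refine ⟨_, Finset.mem_singleton_self _, fun x _ => ?_⟩
  refine (convex_closedBall (scaleKernel x c) ε).integral_mem Metric.isClosed_closedBall ?_
    (hH.integrable (continuous_scaleKernel x))
  filter_upwards [hH.ae_mem] with t ⟨ht_min, ht_max⟩
  have hdist : dist (scaleKernel x t) (scaleKernel x c) ≤ dist t c := by
    simpa only [NNReal.coe_one, one_mul] using (lipschitzWith_scaleKernel x).dist_le_mul t c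
  refine hdist.trans ?_
  rw [dist_eq, abs_le, hc]
  constructor <;> linarith

lemma one_div_256_le_log_log_pow_four {A : ℝ} (hA : 4 ≤ A) : 1 / 256 ≤ log (log A) ^ 4 := by
  have hlog4 : 4 / 3 ≤ log 4 := by
    rw [show (4 : ℝ) = 2 ^ 2 by norm_num, log_pow]
    push_cast
    linarith [log_two_gt_d9]
  have hlogA : 4 / 3 ≤ log A := hlog4.trans (log_le_log (by norm_num) hA)
  have hloglog : 1 / 4 ≤ log (log A) :=
    calc (1 : ℝ) / 4 = 1 - (4 / 3)⁻¹ := by norm_num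
      _ ≤ 1 - (log A)⁻¹ := by gcongr
      _ ≤ log (log A) := one_sub_inv_le_log_of_pos (by linarith)
  calc (1 : ℝ) / 256 = (1 / 4) ^ 4 := by norm_num
    _ ≤ log (log A) ^ 4 := by gcongr

end Entropy

end

theorem stmt10_general :
    ∃ C : ℝ, 0 < C ∧
      ∀ (tmin tmax ε A : ℝ) (s : Set ℝ),
        0 < tmin → tmin ≤ 1 → tmin ≤ tmax →
        ε ∈ Set.Ioo (0 : ℝ) (1 / 2) →
        tmax / (ε * tmin) ≤ A →
        coveringNum ε (scaleClass tmin tmax) s ≤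
          ENNReal.ofReal (Real.exp
            (C * (Real.log A) ^ 3 * (Real.log (Real.log A)) ^ 4)) := by
  refine ⟨4 * 10 ^ 7, by norm_num, fun tmin tmax ε A s ht0 ht1 htt ⟨hε0, hε⟩ hA => ?_⟩
  have hmax : tmax ≤ A * (ε * tmin) := (div_le_iff₀ (by positivity)).1 hA
  have hA1 : 1 ≤ A := (one_le_div (by positivity)).2 (by nlinarith) |>.trans hA
  have hlog : 0 ≤ Real.log A := Real.log_nonneg hA1
  -- `log (log A)` vanishes at `A = exp 1`, so for small `A` a single ball has to suffice.
  rcases le_total A 4 with hA4 | hA4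
  · have hwidth : tmax - tmin ≤ 2 * ε := by
      have hmax4 : tmax ≤ 4 * (ε * tmin) := hmax.trans (by gcongr)
      linarith [mul_nonneg ht0.le (by linarith : 0 ≤ 1 - 2 * ε),
        mul_nonneg hε0.le (sub_nonneg.2 ht1)]
    refine (coveringNum_scaleClass_le_one s hwidth).trans (ENNReal.one_le_ofReal.2 ?_)
    exact Real.one_le_exp (by positivity)
  · have hL : 1 ≤ Real.log A := by
      rw [Real.le_log_iff_exp_le (by positivity)]
      linarith [Real.exp_one_lt_three]
    have hexp : tmax ≤ ε * Real.exp (Real.log A) := by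
      rw [Real.exp_log (by positivity)]
      nlinarith [mul_pos hε0 (zero_lt_one.trans_le hA1)]
    refine (coveringNum_scaleClass_le_exp ht0.le (ht0.trans_le htt) s hL hexp).trans ?_
    refine ENNReal.ofReal_le_ofReal (Real.exp_le_exp.2 ?_)
    calc 130000 * Real.log A ^ 3 ≤ 4 * 10 ^ 7 * Real.log A ^ 3 * (1 / 256) := by
          linarith [pow_nonneg hlog 3]
      _ ≤ 4 * 10 ^ 7 * Real.log A ^ 3 * Real.log (Real.log A) ^ 4 := by
          gcongr
          exact one_div_256_le_log_log_pow_four hA4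

/-- Lemma 7 / `lemma:key-covering`. Sup-norm covering entropy bound for
the class of scale mixtures `x ↦ E_{t∼H}[t e^{-t²x²/2}]`, `H ∈ 𝒫([tmin, tmax])`, over
`[xmin, xmax]`: `log N(ε, ℱ, L_∞) ≤ C log³(tmax xmax/(ε tmin xmin)) log⁴ log(⋯)`, stated
as a bound on the covering number itself. -/
theorem stmt10 :
    ∃ C : ℝ, 0 < C ∧
      ∀ tmin tmax xmin xmax ε : ℝ,
        0 < tmin → tmin ≤ 1 → 1 ≤ tmax →
        0 < xmin → xmin ≤ 1 → 1 ≤ xmax →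
        ε ∈ Set.Ioo (0 : ℝ) (1 / 2) →
        coveringNum ε (scaleClass tmin tmax) (Set.Icc xmin xmax) ≤
          ENNReal.ofReal (Real.exp
            (C * (Real.log (tmax * xmax / (ε * tmin * xmin))) ^ 3 *
              (Real.log (Real.log (tmax * xmax / (ε * tmin * xmin)))) ^ 4)) := by
  obtain ⟨C, hC, hcover⟩ := stmt10_general
  refine ⟨C, hC, fun tmin tmax xmin xmax ε ht0 ht1 ht2 hx0 hx1 hx2 hε => ?_⟩
  have hε0 := hε.1
  exact hcover tmin tmax ε _ _ ht0 ht1 (ht1.trans ht2) hε <|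
    div_le_div₀ (by positivity) (le_mul_of_one_le_right (by positivity) hx2) (by positivity)
      (mul_le_of_le_one_right (by positivity) hx1)
end

section
/- Let K > 0 and λ > 0, and let h(x) = exp(−K e^{λx}) on [−1,1]. There is a universal constant C > 0 such that for every ε ∈ (0,1), if L ≥ C·( log(1/ε) + λ log((λ+1)/ε) ), then the degree-L Chebyshev truncation P_L of h satisfies sup_{x ∈ [−1,1]} |h(x) − P_L(x)| ≤ ε. In particular, the approximation degree is independent of K. -/
/-!
Pulled back by `cos`, the Chebyshev series of `h` becomes the Fourier series of the even periodic
function `θ ↦ h (cos θ)`. If `h` extends holomorphically to a Bernstein ellipse, shifting the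
contour of its Fourier integrals into the complex plane gives the coefficients geometric decay.
The function `exp (-K e^{λz})` is bounded by `1` wherever `e^{λz}` has nonnegative real part, that
is, for `|λ Im z| ≤ π / 2`, whatever the size of `K`. This region contains a Bernstein ellipse
whose ratio of decay is `λ / (λ + 1)`, and the remaining tail of the geometric series is
`2 λ (λ / (λ + 1)) ^ L`.
-/

open MeasureTheory

/-- The `j`-th Chebyshev coefficient of a continuous function `h` on `[-1,1]`:
`c₀ = (1/π)∫₀^π h(cos θ) dθ` and `c_j = (2/π)∫₀^π h(cos θ) cos(jθ) dθ` for `j ≥ 1`. -/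
noncomputable def chebCoeff (h : ℝ → ℝ) (j : ℕ) : ℝ :=
  if j = 0 then (1 / Real.pi) * ∫ θ in (0 : ℝ)..Real.pi, h (Real.cos θ)
  else (2 / Real.pi) * ∫ θ in (0 : ℝ)..Real.pi, h (Real.cos θ) * Real.cos (j * θ)

/-- The degree-`L` Chebyshev truncation `P_L(x) = ∑_{j=0}^L c_j T_j(x)` of `h`. -/
noncomputable def chebTrunc (h : ℝ → ℝ) (L : ℕ) (x : ℝ) : ℝ :=
  ∑ j ∈ Finset.range (L + 1),
    chebCoeff h j * (Polynomial.Chebyshev.T ℝ (j : ℤ)).eval x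

open Complex in
theorem integral_add_mul_I_of_periodic {E : Type*} [NormedAddCommGroup E] [NormedSpace ℂ E]
    {g : ℂ → E} {T : ℝ} (hper : Function.Periodic g T) {a y : ℝ}
    (hd : DifferentiableOn ℂ g (Set.uIcc a (a + T) ×ℂ Set.uIcc 0 y)) :
    ∫ x in a..a + T, g (x + y * I) = ∫ x in a..a + T, g x := by
  have vertical_sides (t : ℝ) : g ((a + T : ℝ) + t * I) = g (a + t * I) := by
    rw [ofReal_add, add_right_comm, hper]
  have cauchy := integral_boundary_rect_eq_zero_of_differentiableOn g a ((a + T : ℝ) + y * I)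
    (by simpa using hd)
  simp only [ofReal_re, ofReal_im, add_re, add_im, re_ofReal_mul, im_ofReal_mul, I_re, I_im,
    mul_zero, mul_one, add_zero, zero_add, ofReal_zero, zero_mul, vertical_sides,
    add_sub_cancel_right, sub_eq_zero] at cauchy
  exact cauchy.symm

open Real

theorem norm_fourierCoeff_le_of_periodic {E : Type*} [NormedAddCommGroup E] [NormedSpace ℂ E]
    {T : ℝ} [hT : Fact (0 < T)] {F : AddCircle T → E} {g : ℂ → E} {y M : ℝ}
    (hper : Function.Periodic g T) (hF : ∀ x : ℝ, F x = g x)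
    (hd : DifferentiableOn ℂ g (Set.uIcc 0 T ×ℂ Set.uIcc 0 y))
    (hM : ∀ x : ℝ, ‖g (x + y * Complex.I)‖ ≤ M) (n : ℤ) :
    ‖fourierCoeff F n‖ ≤ M * exp (2 * π * n * y / T) := by
  have hT0 : (T : ℂ) ≠ 0 := mod_cast hT.out.ne'
  set G : ℂ → E := fun z ↦ Complex.exp (2 * π * Complex.I * (-n : ℤ) * z / T) • g z
  have hG_per : Function.Periodic G T := fun z ↦ by
    have : 2 * π * Complex.I * (-n : ℤ) * (z + T) / T =
        2 * π * Complex.I * (-n : ℤ) * z / T + (-n : ℤ) * (2 * π * Complex.I) := by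
      field_simp
    simp only [G, this, Complex.exp_add, Complex.exp_int_mul_two_pi_mul_I, mul_one, hper z]
  have hG_diff : DifferentiableOn ℂ G (Set.uIcc 0 (0 + T) ×ℂ Set.uIcc 0 y) := by
    rw [zero_add]
    exact DifferentiableOn.smul (by fun_prop) hd
  have hG_norm (x : ℝ) : ‖G (x + y * Complex.I)‖ ≤ M * exp (2 * π * n * y / T) := by
    have : (2 * π * Complex.I * (-n : ℤ) * (x + y * Complex.I) / T).re = 2 * π * n * y / T := by
      rw [Complex.div_ofReal_re]
      simp
    rw [norm_smul, Complex.norm_exp, this, mul_comm]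
    gcongr
    exact hM x
  have shifted : fourierCoeff F n = (1 / T) • ∫ x in (0 : ℝ)..0 + T, G (x + y * Complex.I) := by
    rw [integral_add_mul_I_of_periodic hG_per hG_diff, fourierCoeff_eq_intervalIntegral F n 0]
    simp only [fourier_coe_apply, hF, G]
  have integral_bound := intervalIntegral.norm_integral_le_of_norm_le_const
    (a := 0) (b := 0 + T) fun x _ ↦ hG_norm x
  rw [zero_add, sub_zero, abs_of_pos hT.out] at integral_bound
  rw [shifted, zero_add, norm_smul, norm_of_nonneg (one_div_pos.2 hT.out).le, one_div,
    inv_mul_le_iff₀ hT.out, mul_comm T]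
  exact integral_bound

section ChebyshevSeries

local instance fact_two_pi_pos : Fact (0 < 2 * π) := ⟨two_pi_pos⟩

/-- The function `θ ↦ h (cos θ)` on the circle `ℝ / 2πℤ`, whose Fourier series is the Chebyshev
series of `h`. The cosine is encoded as the real part of the first Fourier monomial. -/
noncomputable def cosPullback (h : ℝ → ℝ) (θ : AddCircle (2 * π)) : ℂ :=
  h (fourier 1 θ).re

theorem fourier_coe_two_pi (n : ℤ) (x : ℝ) :
    fourier n (x : AddCircle (2 * π)) = Complex.exp (n * x * Complex.I) := by
  rw [fourier_coe_apply]
  congr 1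
  push_cast
  field_simp

variable {h : ℝ → ℝ}

theorem cosPullback_coe (h : ℝ → ℝ) (x : ℝ) : cosPullback h x = h (cos x) := by
  rw [cosPullback, fourier_coe_two_pi, Int.cast_one, one_mul, Complex.exp_ofReal_mul_I_re]

theorem continuous_cosPullback (hc : ContinuousOn h (Set.Icc (-1) 1)) :
    Continuous (cosPullback h) := by
  refine Complex.continuous_ofReal.comp (hc.comp_continuous (by fun_prop) fun θ ↦ ?_)
  have norm_le : |(fourier 1 θ : ℂ).re| ≤ 1 :=
    (Complex.abs_re_le_norm _).trans (Circle.norm_coe _).le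
  exact abs_le.1 norm_le

theorem continuous_comp_cos (hc : ContinuousOn h (Set.Icc (-1) 1)) :
    Continuous fun x ↦ h (cos x) :=
  hc.comp_continuous continuous_cos cos_mem_Icc

theorem integral_cexp_neg_mul_of_even {g : ℝ → ℝ} (hg : Continuous g)
    (heven : ∀ x, g (-x) = g x) (a : ℝ) (n : ℤ) :
    ∫ x in (-a)..a, Complex.exp (-n * x * Complex.I) * g x =
      2 * (∫ x in (0 : ℝ)..a, g x * cos (n * x) : ℝ) := by
  set G : ℝ → ℂ := fun x ↦ Complex.exp (-n * x * Complex.I) * g x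
  have hG (b c : ℝ) : IntervalIntegrable G volume b c :=
    Continuous.intervalIntegrable (by fun_prop) b c
  have hG' : IntervalIntegrable (fun x ↦ G (-x)) volume 0 a :=
    Continuous.intervalIntegrable (by fun_prop) 0 a
  have fold (x : ℝ) : G (-x) + G x = (2 * (g x * cos (n * x)) : ℝ) := by
    simp only [G, heven]
    push_cast
    rw [Complex.cos]
    ring_nf
  calc ∫ x in (-a)..a, G x = (∫ x in (-a)..(-0), G x) + ∫ x in (0 : ℝ)..a, G x := by
        rw [neg_zero, intervalIntegral.integral_add_adjacent_intervals (hG _ _) (hG _ _)]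
    _ = ∫ x in (0 : ℝ)..a, (G (-x) + G x) := by
        rw [← intervalIntegral.integral_comp_neg, intervalIntegral.integral_add hG' (hG _ _)]
    _ = 2 * (∫ x in (0 : ℝ)..a, g x * cos (n * x) : ℝ) := by
        simp only [fold]
        rw [intervalIntegral.integral_ofReal, intervalIntegral.integral_const_mul,
          Complex.ofReal_mul, Complex.ofReal_ofNat]

theorem fourierCoeff_cosPullback (hc : ContinuousOn h (Set.Icc (-1) 1)) (n : ℤ) :
    fourierCoeff (cosPullback h) n =
      (π⁻¹ * ∫ x in (0 : ℝ)..π, h (cos x) * cos (n * x) : ℝ) := by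
  have symmetric_interval : -π + 2 * π = π := by ring
  rw [fourierCoeff_eq_intervalIntegral _ n (-π), symmetric_interval]
  simp only [fourier_coe_two_pi, cosPullback_coe, smul_eq_mul, Int.cast_neg]
  rw [integral_cexp_neg_mul_of_even (continuous_comp_cos hc) (by simp) π n, Complex.real_smul]
  push_cast
  field_simp

theorem fourierCoeff_cosPullback_neg (hc : ContinuousOn h (Set.Icc (-1) 1)) (n : ℤ) :
    fourierCoeff (cosPullback h) (-n) = fourierCoeff (cosPullback h) n := by
  simp [fourierCoeff_cosPullback hc]

theorem chebCoeff_eq_fourierCoeff (hc : ContinuousOn h (Set.Icc (-1) 1)) (n : ℕ) :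
    (chebCoeff h n : ℂ) = (if n = 0 then 1 else 2) * fourierCoeff (cosPullback h) n := by
  rw [fourierCoeff_cosPullback hc, chebCoeff]
  split_ifs with hn
  · simp [hn]
  · push_cast
    ring

theorem norm_fourierCoeff_cosPullback_le (hc : ContinuousOn h (Set.Icc (-1) 1)) (n : ℕ) :
    ‖fourierCoeff (cosPullback h) n‖ ≤ ‖chebCoeff h n‖ := by
  rw [← Complex.norm_real, chebCoeff_eq_fourierCoeff hc, norm_mul]
  refine le_mul_of_one_le_left (norm_nonneg _) ?_
  split_ifs <;> norm_num

theorem abs_chebCoeff_le (hc : ContinuousOn h (Set.Icc (-1) 1)) (n : ℕ) :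
    |chebCoeff h n| ≤ 2 * ‖fourierCoeff (cosPullback h) n‖ := by
  rw [← norm_eq_abs, ← Complex.norm_real, chebCoeff_eq_fourierCoeff hc, norm_mul]
  gcongr
  split_ifs <;> norm_num

theorem summable_fourierCoeff_cosPullback (hc : ContinuousOn h (Set.Icc (-1) 1))
    (hs : Summable (chebCoeff h)) : Summable (fourierCoeff (cosPullback h)) := by
  have summable_nat : Summable fun n : ℕ ↦ fourierCoeff (cosPullback h) n :=
    .of_norm_bounded hs.norm (norm_fourierCoeff_cosPullback_le hc)
  exact .of_nat_of_neg summable_nat (by simpa only [fourierCoeff_cosPullback_neg hc])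

theorem hasSum_chebCoeff_mul_cos (hc : ContinuousOn h (Set.Icc (-1) 1))
    (hs : Summable (chebCoeff h)) (t : ℝ) :
    HasSum (fun n : ℕ ↦ chebCoeff h n * cos (n * t)) (h (cos t)) := by
  set a := fourierCoeff (cosPullback h)
  let F : C(AddCircle (2 * π), ℂ) := ⟨cosPullback h, continuous_cosPullback hc⟩
  have fourier_series : HasSum (fun n : ℤ ↦ a n • fourier n (t : AddCircle (2 * π)))
      (cosPullback h t) :=
    has_pointwise_sum_fourier_series_of_summable (f := F)
      (summable_fourierCoeff_cosPullback hc hs) t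
  -- Pairing `n` with `-n` counts the constant term twice.
  have paired := fourier_series.nat_add_neg.sub (hasSum_ite_eq (0 : ℕ) (a 0))
  have limit : cosPullback h t + a 0 • fourier 0 (t : AddCircle (2 * π)) - a 0 = h (cos t) := by
    simp [cosPullback_coe]
  rw [limit] at paired
  rw [← Complex.hasSum_ofReal]
  refine paired.congr_fun fun n ↦ ?_
  have even_coeff : a (-n) = a n := fourierCoeff_cosPullback_neg hc n
  rw [even_coeff, fourier_coe_two_pi, fourier_coe_two_pi, Complex.ofReal_mul,
    chebCoeff_eq_fourierCoeff hc]
  rcases eq_or_ne n 0 with rfl | hn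
  · simp [a]
  · simp only [hn, if_false, a, smul_eq_mul]
    push_cast
    rw [Complex.cos]
    ring_nf

theorem hasSum_chebCoeff_mul_eval_T (hc : ContinuousOn h (Set.Icc (-1) 1))
    (hs : Summable (chebCoeff h)) {x : ℝ} (hx : x ∈ Set.Icc (-1) 1) :
    HasSum (fun n : ℕ ↦ chebCoeff h n * (Polynomial.Chebyshev.T ℝ (n : ℤ)).eval x) (h x) := by
  have cos_series := hasSum_chebCoeff_mul_cos hc hs (arccos x)
  simpa only [← Int.cast_natCast (R := ℝ), ← Polynomial.Chebyshev.T_real_cos,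
    cos_arccos hx.1 hx.2] using cos_series

theorem abs_sub_chebTrunc_le_of_geometric (hc : ContinuousOn h (Set.Icc (-1) 1)) {B r : ℝ}
    (hr0 : 0 ≤ r) (hr1 : r < 1) (hB : ∀ n, |chebCoeff h n| ≤ B * r ^ n) (L : ℕ) {x : ℝ}
    (hx : x ∈ Set.Icc (-1) 1) :
    |h x - chebTrunc h L x| ≤ B * r ^ (L + 1) / (1 - r) := by
  have geometric := hasSum_geometric_of_lt_one hr0 hr1
  have summable_coeff : Summable (chebCoeff h) :=
    .of_norm_bounded (geometric.summable.mul_left B) hB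
  have tail := (hasSum_nat_add_iff' (L + 1)).2 (hasSum_chebCoeff_mul_eval_T hc summable_coeff hx)
  rw [div_eq_mul_inv]
  refine tail.norm_le_of_bounded (geometric.mul_left (B * r ^ (L + 1))) fun n ↦ ?_
  calc ‖chebCoeff h (n + (L + 1)) *
        (Polynomial.Chebyshev.T ℝ ((n + (L + 1) : ℕ) : ℤ)).eval x‖
      ≤ |chebCoeff h (n + (L + 1))| := by
        rw [norm_mul]
        exact mul_le_of_le_one_right (norm_nonneg _)
          (Polynomial.Chebyshev.abs_eval_T_real_le_one _ (abs_le.2 hx))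
    _ ≤ B * r ^ (n + (L + 1)) := hB _
    _ = B * r ^ (L + 1) * r ^ n := by ring

/-- The closed region bounded by the Bernstein ellipse with foci `±1` and sum of semi-axes `e ^ y`.
It is encoded as the image under `cos` of a closed strip around the real axis. -/
def bernsteinEllipse (y : ℝ) : Set ℂ :=
  Complex.cos '' {z | |z.im| ≤ y}

theorem ofReal_mem_bernsteinEllipse {x y : ℝ} (hx : x ∈ Set.Icc (-1) 1) (hy : 0 ≤ y) :
    (x : ℂ) ∈ bernsteinEllipse y :=
  ⟨arccos x, by simpa using hy, by rw [← Complex.ofReal_cos, cos_arccos hx.1 hx.2]⟩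

theorem abs_im_le_sinh_of_mem_bernsteinEllipse {y : ℝ} {z : ℂ} (hz : z ∈ bernsteinEllipse y) :
    |z.im| ≤ sinh y := by
  obtain ⟨w, hw, rfl⟩ := hz
  have im_cos : (Complex.cos w).im = -(sin w.re * sinh w.im) := by
    conv_lhs => rw [← Complex.re_add_im w, Complex.cos_add_mul_I]
    simp [Complex.cos_ofReal_im, Complex.cosh_ofReal_im, Complex.sin_ofReal_re,
      Complex.sinh_ofReal_re]
  calc |(Complex.cos w).im| = |sin w.re| * sinh |w.im| := by
        rw [im_cos, abs_neg, abs_mul, abs_sinh]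
    _ ≤ sinh |w.im| :=
        mul_le_of_le_one_left (sinh_nonneg_iff.2 (abs_nonneg _)) (abs_sin_le_one _)
    _ ≤ sinh y := sinh_le_sinh.2 hw

section Bernstein

variable {f : ℂ → ℂ} {y M : ℝ}

theorem continuousOn_of_differentiableOn_bernsteinEllipse
    (hd : DifferentiableOn ℂ f (bernsteinEllipse y)) (hfh : ∀ x : ℝ, x ∈ Set.Icc (-1) 1 → f x = h x)
    (hy : 0 ≤ y) : ContinuousOn h (Set.Icc (-1) 1) := by
  have continuousOn_re : ContinuousOn (fun x : ℝ ↦ (f x).re) (Set.Icc (-1) 1) :=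
    Complex.continuous_re.comp_continuousOn <|
      hd.continuousOn.comp Complex.continuous_ofReal.continuousOn fun _ hx ↦
        ofReal_mem_bernsteinEllipse hx hy
  exact continuousOn_re.congr fun x hx ↦ by simp [hfh x hx]

theorem norm_fourierCoeff_cosPullback_le_of_bernsteinEllipse
    (hd : DifferentiableOn ℂ f (bernsteinEllipse y)) (hfh : ∀ x : ℝ, x ∈ Set.Icc (-1) 1 → f x = h x)
    (hM : ∀ z ∈ bernsteinEllipse y, ‖f z‖ ≤ M) (hy : 0 ≤ y) (n : ℕ) :
    ‖fourierCoeff (cosPullback h) n‖ ≤ M * exp (-y) ^ n := by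
  have periodic : Function.Periodic (f ∘ Complex.cos) (2 * π : ℝ) := fun z ↦ by
    simp [Complex.cos_add_two_pi]
  have extends_pullback (x : ℝ) : cosPullback h x = (f ∘ Complex.cos) x := by
    rw [cosPullback_coe, ← hfh _ (cos_mem_Icc x), Complex.ofReal_cos, Function.comp_apply]
  have differentiableOn_strip : DifferentiableOn ℂ (f ∘ Complex.cos)
      (Set.uIcc 0 (2 * π) ×ℂ Set.uIcc 0 (-y)) := by
    refine hd.comp Complex.differentiable_cos.differentiableOn fun z hz ↦ ⟨z, ?_, rfl⟩
    have him := hz.2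
    rw [Set.mem_preimage, Set.uIcc_of_ge (by linarith)] at him
    exact abs_le.2 ⟨him.1, him.2.trans hy⟩
  have norm_le (x : ℝ) : ‖(f ∘ Complex.cos) (x + (-y : ℝ) * Complex.I)‖ ≤ M :=
    hM _ ⟨_, by simp [abs_of_nonneg hy], rfl⟩
  have decay : exp (2 * π * (n : ℤ) * -y / (2 * π)) = exp (-y) ^ n := by
    rw [← exp_nat_mul]
    congr 1
    push_cast
    field_simp
  simpa only [decay] using
    norm_fourierCoeff_le_of_periodic periodic extends_pullback differentiableOn_strip norm_le n

theorem abs_sub_chebTrunc_le_of_bernsteinEllipse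
    (hd : DifferentiableOn ℂ f (bernsteinEllipse y)) (hfh : ∀ x : ℝ, x ∈ Set.Icc (-1) 1 → f x = h x)
    (hM : ∀ z ∈ bernsteinEllipse y, ‖f z‖ ≤ M) (hy : 0 < y) (L : ℕ) {x : ℝ}
    (hx : x ∈ Set.Icc (-1) 1) :
    |h x - chebTrunc h L x| ≤ 2 * M * exp (-y) ^ (L + 1) / (1 - exp (-y)) := by
  have hc := continuousOn_of_differentiableOn_bernsteinEllipse hd hfh hy.le
  refine abs_sub_chebTrunc_le_of_geometric hc (exp_pos _).le (by simpa using hy) (fun n ↦ ?_) L hx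
  calc |chebCoeff h n| ≤ 2 * ‖fourierCoeff (cosPullback h) n‖ := abs_chebCoeff_le hc n
    _ ≤ 2 * (M * exp (-y) ^ n) := by
        gcongr
        exact norm_fourierCoeff_cosPullback_le_of_bernsteinEllipse hd hfh hM hy.le n
    _ = 2 * M * exp (-y) ^ n := by ring

end Bernstein

end ChebyshevSeries

theorem norm_cexp_neg_mul_cexp_le_one {K : ℝ} (hK : 0 ≤ K) {z : ℂ} (hz : |z.im| ≤ π / 2) :
    ‖Complex.exp (-K * Complex.exp z)‖ ≤ 1 := by
  have re_nonneg : 0 ≤ (Complex.exp z).re := by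
    rw [Complex.exp_re]
    exact mul_nonneg (exp_pos _).le
      (cos_nonneg_of_neg_pi_div_two_le_of_le (abs_le.1 hz).1 (abs_le.1 hz).2)
  rw [Complex.norm_exp, exp_le_one_iff, ← Complex.ofReal_neg, Complex.re_ofReal_mul, neg_mul]
  exact neg_nonpos.2 (mul_nonneg hK re_nonneg)

theorem abs_exp_sub_chebTrunc_le {K lam y : ℝ} (hK : 0 ≤ K) (hy : 0 < y)
    (hs : |lam| * sinh y ≤ π / 2) (L : ℕ) {x : ℝ} (hx : x ∈ Set.Icc (-1) 1) :
    |exp (-K * exp (lam * x)) - chebTrunc (fun t ↦ exp (-K * exp (lam * t))) L x| ≤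
      2 * exp (-y) ^ (L + 1) / (1 - exp (-y)) := by
  have norm_le_one : ∀ z ∈ bernsteinEllipse y,
      ‖Complex.exp (-K * Complex.exp (lam * z))‖ ≤ 1 := fun z hz ↦ by
    refine norm_cexp_neg_mul_cexp_le_one hK ?_
    rw [Complex.im_ofReal_mul, abs_mul]
    exact (mul_le_mul_of_nonneg_left (abs_im_le_sinh_of_mem_bernsteinEllipse hz)
      (abs_nonneg lam)).trans hs
  simpa only [mul_one] using
    abs_sub_chebTrunc_le_of_bernsteinEllipse (h := fun t ↦ exp (-K * exp (lam * t)))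
      (by fun_prop) (fun t _ ↦ by push_cast; rfl) norm_le_one hy L hx

theorem mul_sinh_log_add_one_div_le_one {t : ℝ} (ht : 0 < t) :
    t * sinh (log ((t + 1) / t)) ≤ 1 := by
  have closed_form : t * sinh (log ((t + 1) / t)) = (2 * t + 1) / (2 * t + 2) := by
    rw [sinh_log (by positivity)]
    field_simp
    ring
  rw [closed_form, div_le_one (by positivity)]
  linarith

theorem add_one_mul_log_two_mul_le {t : ℝ} (ht : 0 < t) :
    (t + 1) * log (2 * t) ≤ 6 * (t * log (t + 1)) := by
  have log_nonneg : 0 ≤ log (t + 1) := Real.log_nonneg (by linarith)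
  rcases le_total (2 * t) 1 with small | large
  · have : log (2 * t) ≤ 0 := log_nonpos (by positivity) small
    nlinarith [mul_nonneg ht.le log_nonneg]
  · have log_le : log (2 * t) ≤ 2 * log (t + 1) := by
      rw [← Nat.cast_ofNat, ← log_pow]
      exact log_le_log (by positivity) (by push_cast; nlinarith)
    nlinarith

theorem two_mul_mul_div_add_one_pow_le {lam ε : ℝ} {L : ℕ} (hlam : 0 < lam) (hε0 : 0 < ε)
    (hε1 : ε ≤ 1) (hL : 6 * (log (1 / ε) + lam * log ((lam + 1) / ε)) ≤ L) :
    2 * lam * (lam / (lam + 1)) ^ L ≤ ε := by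
  have log_ratio : log (lam / (lam + 1)) ≤ -1 / (lam + 1) := by
    have := log_le_sub_one_of_pos (show 0 < lam / (lam + 1) by positivity)
    convert this using 1
    field_simp
    ring
  have hlogε : log ε ≤ 0 := log_nonpos hε0.le hε1
  rw [one_div, log_inv, log_div (by positivity) hε0.ne'] at hL
  have log_tail : log (2 * lam) - L / (lam + 1) ≤ log ε := by
    rw [sub_le_comm, le_div_iff₀ (by positivity)]
    nlinarith [add_one_mul_log_two_mul_le hlam]
  rw [← log_le_log_iff (by positivity) hε0, log_mul (by positivity) (by positivity), log_pow]
  calc log (2 * lam) + L * log (lam / (lam + 1))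
      ≤ log (2 * lam) + L * (-1 / (lam + 1)) := by gcongr
    _ = log (2 * lam) - L / (lam + 1) := by ring
    _ ≤ log ε := log_tail

/-- Lemma 9 / `lem:chebyshev_approximation`. For
`h(x) = exp(-K e^{λx})` on `[-1,1]` with `K, λ > 0`, the degree-`L` Chebyshev truncation
satisfies `‖h - P_L‖_∞ ≤ ε` as soon as `L ≥ C (log(1/ε) + λ log((λ+1)/ε))`; in
particular the required degree is independent of `K`. -/
theorem stmt12 :
    ∃ C : ℝ, 0 < C ∧
      ∀ (K lam ε : ℝ) (L : ℕ),
        0 < K → 0 < lam → ε ∈ Set.Ioo (0 : ℝ) 1 →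
        C * (Real.log (1 / ε) + lam * Real.log ((lam + 1) / ε)) ≤ (L : ℝ) →
        ∀ x ∈ Set.Icc (-1 : ℝ) 1,
          |Real.exp (-K * Real.exp (lam * x)) -
            chebTrunc (fun y => Real.exp (-K * Real.exp (lam * y))) L x| ≤ ε := by
  refine ⟨6, by norm_num, fun K lam ε L hK hlam hε hL x hx ↦ ?_⟩
  set y := log ((lam + 1) / lam)
  have hy : 0 < y := log_pos (by rw [one_lt_div hlam]; linarith)
  have hs : |lam| * sinh y ≤ π / 2 := by
    rw [abs_of_pos hlam]
    linarith [mul_sinh_log_add_one_div_le_one hlam, two_le_pi]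
  have ratio : exp (-y) = lam / (lam + 1) := by
    rw [exp_neg, exp_log (by positivity), inv_div]
  refine (abs_exp_sub_chebTrunc_le hK.le hy hs L hx).trans ?_
  calc 2 * exp (-y) ^ (L + 1) / (1 - exp (-y)) = 2 * lam * (lam / (lam + 1)) ^ L := by
        rw [ratio, one_sub_div (by positivity), pow_succ]
        field_simp
        ring
    _ ≤ ε := two_mul_mul_div_add_one_pow_le hlam hε.1 hε.2.le hL
end

section
/- Let μ_1, μ_2 ∈ ℝ and let G_1, G_2 be probability measures on [0,∞). Then H²( f_{μ_1,G_1}, f_{μ_2,G_2} ) ≥ (1/4) · H²( f_{|μ_1−μ_2|, G_1}, f_{−|μ_1−μ_2|, G_1} ). -/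
open MeasureTheory ProbabilityTheory
open scoped ENNReal NNReal

/-
Reflecting the line exchanges the shifts of a symmetric density by `d` and `-d` and fixes every
density symmetric about `0`. So, once `μ₂` has been translated to `0`, the shifts of `f_{0,G₁}` by
`|μ₁ - μ₂|` and by `-|μ₁ - μ₂|` are equally far from `f_{0,G₂}`, and the triangle inequality in
`L²` for square roots of densities, in the form `(a + b)² ≤ 2 (a² + b²)`, bounds their mutual
distance.
-/

section Hellinger

variable {p q r : ℝ → ℝ}

lemma memLp_sqrt_of_integrable {α : Type*} {m : MeasurableSpace α} {ν : Measure α} {f : α → ℝ}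
    (hf : Integrable f ν) : MemLp (fun x => √(f x)) 2 ν := by
  rw [memLp_two_iff_integrable_sq (Real.continuous_sqrt.comp_aestronglyMeasurable hf.1)]
  -- `√` vanishes on negative reals, so `(√f)²` is the positive part of `f`.
  have sq_sqrt_eq (x : α) : √(f x) ^ 2 = max (f x) 0 := by
    rcases le_total 0 (f x) with h | h
    · rw [Real.sq_sqrt h, max_eq_left h]
    · rw [Real.sqrt_eq_zero_of_nonpos h, max_eq_right h, zero_pow two_ne_zero]
  simpa only [sq_sqrt_eq] using hf.pos_part

lemma integrable_sq_sqrt_sub_sqrt (hp : Integrable p) (hq : Integrable q) :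
    Integrable fun x => (√(p x) - √(q x)) ^ 2 :=
  ((memLp_sqrt_of_integrable hp).sub (memLp_sqrt_of_integrable hq)).integrable_sq

lemma hellingerSq_comm (p q : ℝ → ℝ) : hellingerSq p q = hellingerSq q p := by
  simp only [hellingerSq, sub_sq_comm]

lemma hellingerSq_comp_neg (p q : ℝ → ℝ) :
    hellingerSq (fun x => p (-x)) (fun x => q (-x)) = hellingerSq p q :=
  integral_neg_eq_self (fun x => (√(p x) - √(q x)) ^ 2) volume

lemma hellingerSq_comp_sub_right (p q : ℝ → ℝ) (c : ℝ) :
    hellingerSq (fun x => p (x - c)) (fun x => q (x - c)) = hellingerSq p q :=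
  integral_sub_right_eq_self (fun x => (√(p x) - √(q x)) ^ 2) c

lemma hellingerSq_le_two_mul_add (hp : Integrable p) (hq : Integrable q) (hr : Integrable r) :
    hellingerSq p r ≤ 2 * (hellingerSq p q + hellingerSq q r) := by
  have hpq := integrable_sq_sqrt_sub_sqrt hp hq
  have hqr := integrable_sq_sqrt_sub_sqrt hq hr
  simp only [hellingerSq]
  rw [← integral_add hpq hqr, ← integral_const_mul]
  refine integral_mono (integrable_sq_sqrt_sub_sqrt hp hr) ((hpq.add hqr).const_mul 2) fun x => ?_
  simpa only [sub_add_sub_cancel] using add_sq_le (a := √(p x) - √(q x)) (b := √(q x) - √(r x))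

lemma hellingerSq_comp_sub_neg (hp : p.Even) (hq : q.Even) (d : ℝ) :
    hellingerSq (fun x => p (x - -d)) q = hellingerSq (fun x => p (x - d)) q := by
  rw [← hellingerSq_comp_neg]
  have hshift (x : ℝ) : p (-x - -d) = p (x - d) := by rw [← hp (x - d)]; ring_nf
  simp only [hshift, hq _]

lemma hellingerSq_comp_sub_abs (hp : p.Even) (hq : q.Even) (d : ℝ) :
    hellingerSq (fun x => p (x - |d|)) q = hellingerSq (fun x => p (x - d)) q := by
  rcases abs_choice d with h | h <;> rw [h]
  exact hellingerSq_comp_sub_neg hp hq d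

lemma hellingerSq_comp_sub_comp_sub_neg_le (hp : Integrable p) (hq : Integrable q)
    (hp_even : p.Even) (hq_even : q.Even) (d : ℝ) :
    hellingerSq (fun x => p (x - d)) (fun x => p (x - -d)) ≤
      4 * hellingerSq (fun x => p (x - d)) q := by
  have htriangle := hellingerSq_le_two_mul_add (hp.comp_sub_right d) hq (hp.comp_sub_right (-d))
  rw [hellingerSq_comm q, hellingerSq_comp_sub_neg hp_even hq_even] at htriangle
  linarith

end Hellinger

section ScaleMixture

lemma integral_norm_one_div_mul_comp_div_le (g : ℝ → ℝ) (σ : ℝ) :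
    ∫ x, ‖1 / σ * g (x / σ)‖ ≤ ∫ x, ‖g x‖ := by
  simp only [norm_mul]
  rw [integral_const_mul, Measure.integral_comp_div (fun x => ‖g x‖) σ, smul_eq_mul, ← mul_assoc]
  refine mul_le_of_le_one_left (integral_nonneg fun _ => norm_nonneg _) ?_
  rw [Real.norm_eq_abs, ← abs_mul, one_div]
  rcases eq_or_ne σ 0 with rfl | hσ
  · simp
  · simp [hσ]

lemma integrable_prod_one_div_mul_comp_div {g : ℝ → ℝ} (hg_meas : Measurable g)
    (hg : Integrable g) (G : Measure ℝ) [IsFiniteMeasure G] :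
    Integrable (fun z : ℝ × ℝ => 1 / z.2 * g (z.1 / z.2)) (volume.prod G) := by
  have hmeas : Measurable fun z : ℝ × ℝ => 1 / z.2 * g (z.1 / z.2) := by fun_prop
  refine (integrable_prod_iff' hmeas.aestronglyMeasurable).2 ⟨.of_forall fun σ => ?_, ?_⟩
  · rcases eq_or_ne σ 0 with rfl | hσ
    · simp
    · exact (hg.comp_div hσ).const_mul (1 / σ)
  · refine .of_bound hmeas.norm.stronglyMeasurable.integral_prod_left'.aestronglyMeasurable
      (∫ x, ‖g x‖) (.of_forall fun σ => ?_)
    rw [Real.norm_of_nonneg (integral_nonneg fun _ => norm_nonneg _)]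
    exact integral_norm_one_div_mul_comp_div_le g σ

lemma stdNormalPDF_eq_gaussianPDFReal : stdNormalPDF = gaussianPDFReal 0 1 := by
  ext x
  simp [stdNormalPDF, gaussianPDFReal, div_eq_inv_mul]

lemma integrable_mixDensity_zero (G : Measure ℝ) [IsFiniteMeasure G] :
    Integrable (mixDensity 0 G) := by
  have hkernel := integrable_prod_one_div_mul_comp_div (measurable_gaussianPDFReal 0 1)
    (integrable_gaussianPDFReal 0 1) G
  unfold mixDensity
  simpa only [sub_zero, stdNormalPDF_eq_gaussianPDFReal] using hkernel.integral_prod_left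

lemma mixDensity_zero_even (G : Measure ℝ) : (mixDensity 0 G).Even := fun x => by
  simp only [mixDensity, stdNormalPDF, sub_zero, neg_div, neg_sq]

lemma mixDensity_eq_comp_sub (μ : ℝ) (G : Measure ℝ) :
    mixDensity μ G = fun x => mixDensity 0 G (x - μ) := by
  ext x
  simp only [mixDensity, sub_zero]

end ScaleMixture

theorem stmt13_general {p q : ℝ → ℝ} (hp : Integrable p) (hq : Integrable q)
    (hp_even : p.Even) (hq_even : q.Even) (μ₁ μ₂ : ℝ) :
    (1 / 4) * hellingerSq (fun x => p (x - |μ₁ - μ₂|)) (fun x => p (x - -|μ₁ - μ₂|)) ≤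
      hellingerSq (fun x => p (x - μ₁)) (fun x => q (x - μ₂)) := by
  have hcenter : hellingerSq (fun x => p (x - μ₁)) (fun x => q (x - μ₂)) =
      hellingerSq (fun x => p (x - (μ₁ - μ₂))) q := by
    rw [← hellingerSq_comp_sub_right (fun x => p (x - (μ₁ - μ₂))) q μ₂]
    simp only [sub_sub, add_sub_cancel]
  rw [hcenter, ← hellingerSq_comp_sub_abs hp_even hq_even]
  linarith [hellingerSq_comp_sub_comp_sub_neg_le hp hq hp_even hq_even |μ₁ - μ₂|]

/-- Lemma 10 / `lemma:symmetrization`. Symmetrization inequality for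
normal scale mixtures:
`H²(f_{μ₁,G₁}, f_{μ₂,G₂}) ≥ (1/4) H²(f_{|μ₁-μ₂|,G₁}, f_{-|μ₁-μ₂|,G₁})`. -/
theorem stmt13 (μ₁ μ₂ : ℝ) (G₁ G₂ : Measure ℝ)
    (hG₁ : IsProbabilityMeasure G₁) (hG₂ : IsProbabilityMeasure G₂)
    (hG₁supp : G₁ (Set.Iio 0) = 0) (hG₂supp : G₂ (Set.Iio 0) = 0) :
    (1 / 4) * hellingerSq (mixDensity |μ₁ - μ₂| G₁) (mixDensity (-|μ₁ - μ₂|) G₁) ≤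
      hellingerSq (mixDensity μ₁ G₁) (mixDensity μ₂ G₂) := by
  simpa only [← mixDensity_eq_comp_sub] using stmt13_general (integrable_mixDensity_zero G₁)
    (integrable_mixDensity_zero G₂) (mixDensity_zero_even G₁) (mixDensity_zero_even G₂) μ₁ μ₂
end

section
/- Let 0 < σ_min ≤ 1 ≤ σ_max and let 𝒫₀ = { f_{0,G} : supp(G) ⊆ [σ_min, σ_max] } be the class of centered normal scale mixture densities. Then there is a universal constant C > 0 such that for every ε ∈ (0,1/2), the covering number of 𝒫₀ in the sup norm on ℝ satisfies log N(ε, 𝒫₀, L_∞(ℝ)) ≤ C · log³( 1/(ε σ_min) ) · log⁴ log( 1/(ε σ_min) ). In particular, the bound does not depend on σ_max. -/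
open MeasureTheory ProbabilityTheory
open scoped ENNReal NNReal

/-!
Rescaling `x ↦ ε x` maps the problem at level `ε` and least scale `σmin` to the one at level `1`
and least scale `a = ε σmin`, so only `a` matters. There, scales `s > 1` have density at most
`2 / 5` and are approximated by zero, whatever `σmax` is; the precisions `s⁻²` of the remaining
scales lie in `O(log (1 / a))` geometric cells `[t, 3t/2)`. On such a cell, with `z = x² t / 2` and
`u = 1 - s⁻² / t ∈ (-1/2, 0]`,
`exp (-x² s⁻² / 2) = exp (z (u - 1)) = ∑ uᵏ Poisson(z){k}`,
the generating function of a Poisson law. Truncating it after `K = O(log (1 / a))` terms costs at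
most `|u|ᴷ`, *uniformly in `x`*. The class is therefore uniformly close to an
`O(log² (1 / a))`-dimensional box of combinations of functions bounded by `1`, and a grid in the
coefficients with `exp (O(log (1 / a)))` points per coordinate covers it.
-/

/-! ### Covering numbers -/

lemma coveringNum_le_card {ε : ℝ} {F : Set (ℝ → ℝ)} {s : Set ℝ} (C : Finset (ℝ → ℝ))
    (hC : ∀ f ∈ F, ∃ g ∈ C, ∀ x ∈ s, |f x - g x| ≤ ε) : coveringNum ε F s ≤ C.card :=
  sInf_le ⟨C, rfl, hC⟩

lemma coveringNum_le_coveringNum_of_transfer {ε ε' : ℝ} {F F' : Set (ℝ → ℝ)} {s s' : Set ℝ}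
    (T : (ℝ → ℝ) → ℝ → ℝ)
    (hT : ∀ f ∈ F, ∃ f' ∈ F', ∀ g : ℝ → ℝ,
      (∀ x ∈ s', |f' x - g x| ≤ ε') → ∀ x ∈ s, |f x - T g x| ≤ ε) :
    coveringNum ε F s ≤ coveringNum ε' F' s' := by
  classical
  refine le_sInf ?_
  rintro _ ⟨C, rfl, hC⟩
  refine (coveringNum_le_card (C.image T) fun f hf => ?_).trans
    (by exact_mod_cast Finset.card_image_le)
  obtain ⟨f', hf', hff'⟩ := hT f hf
  obtain ⟨g, hg, hf'g⟩ := hC f' hf'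
  exact ⟨T g, Finset.mem_image_of_mem T hg, hff' g hf'g⟩

lemma abs_round_le_of_abs_le {y : ℝ} {R : ℕ} (hy : |y| ≤ R) : |round y| ≤ R := by
  have hround : |(round y : ℝ)| ≤ |y| + 1 / 2 := by
    linarith [abs_sub_abs_le_abs_sub (round y : ℝ) y, abs_sub_comm y (round y : ℝ), abs_sub_round y]
  have hlt : |(round y : ℝ)| < R + 1 := by linarith
  exact Int.lt_add_one_iff.mp (by exact_mod_cast hlt)

lemma abs_sub_round_div_mul_le {η : ℝ} (hη : 0 < η) (m : ℝ) :
    |m - round (m / η) * η| ≤ η / 2 :=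
  calc |m - round (m / η) * η| = |(m / η - round (m / η)) * η| := by
        rw [sub_mul, div_mul_cancel₀ m hη.ne']
    _ = |m / η - round (m / η)| * η := by rw [abs_mul, abs_of_pos hη]
    _ ≤ 1 / 2 * η := by gcongr; exact abs_sub_round _
    _ = η / 2 := by ring

lemma abs_sum_mul_sub_sum_mul_le {ι : Type*} [Fintype ι] {m m' b : ι → ℝ} {r : ℝ}
    (hm : ∀ i, |m i - m' i| ≤ r) (hb : ∀ i, |b i| ≤ 1) :
    |∑ i, m i * b i - ∑ i, m' i * b i| ≤ Fintype.card ι * r :=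
  calc |∑ i, m i * b i - ∑ i, m' i * b i| = |∑ i, (m i - m' i) * b i| := by
        simp only [sub_mul, Finset.sum_sub_distrib]
    _ ≤ ∑ i, |(m i - m' i) * b i| := Finset.abs_sum_le_sum_abs _ _
    _ ≤ ∑ _i : ι, r := by
        gcongr with i
        rw [abs_mul]
        exact (mul_le_of_le_one_right (abs_nonneg _) (hb i)).trans (hm i)
    _ = Fintype.card ι * r := by simp

lemma coveringNum_le_pow_of_approx {ι : Type*} [Fintype ι] {F : Set (ℝ → ℝ)} {s : Set ℝ}
    {b : ι → ℝ → ℝ} {δ ε η : ℝ} {R : ℕ} (hη : 0 < η) (hb : ∀ i, ∀ x ∈ s, |b i x| ≤ 1)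
    (hF : ∀ f ∈ F, ∃ m : ι → ℝ,
      (∀ i, |m i| ≤ R * η) ∧ ∀ x ∈ s, |f x - ∑ i, m i * b i x| ≤ δ)
    (hε : δ + Fintype.card ι * (η / 2) ≤ ε) :
    coveringNum ε F s ≤ (2 * R + 1) ^ Fintype.card ι := by
  classical
  let grid : Finset (ι → ℤ) := Fintype.piFinset fun _ => Finset.Icc (-(R : ℤ)) R
  let comb : (ι → ℤ) → ℝ → ℝ := fun n x => ∑ i, (n i * η) * b i x
  have hgrid : grid.card = (2 * R + 1) ^ Fintype.card ι := by
    simp only [grid, Fintype.card_piFinset, Int.card_Icc, Finset.prod_const, Finset.card_univ]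
    congr 1
    omega
  have hcover : coveringNum ε F s ≤ (grid.image comb).card := by
    refine coveringNum_le_card _ fun f hf => ?_
    obtain ⟨m, hmR, hfm⟩ := hF f hf
    have hmem : (fun i => round (m i / η)) ∈ grid := by
      simp only [grid, Fintype.mem_piFinset, Finset.mem_Icc, ← abs_le]
      intro i
      apply abs_round_le_of_abs_le
      rw [abs_div, abs_of_pos hη]
      exact (div_le_iff₀ hη).mpr (hmR i)
    refine ⟨_, Finset.mem_image_of_mem comb hmem, fun x hx => ?_⟩
    have hround := abs_sum_mul_sub_sum_mul_le
      (fun i => abs_sub_round_div_mul_le hη (m i)) (fun i => hb i x hx)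
    linarith [abs_sub_le (f x) (∑ i, m i * b i x) (∑ i, (round (m i / η) * η) * b i x), hfm x hx]
  refine hcover.trans ?_
  exact_mod_cast hgrid ▸ Finset.card_image_le

/-! ### Integrals of nearly separable kernels -/

lemma abs_integral_le_of_ae_abs_le {Ω : Type*} [MeasurableSpace Ω] {G : Measure Ω}
    [IsProbabilityMeasure G] {f : Ω → ℝ} {M : ℝ} (hf : ∀ᵐ s ∂G, |f s| ≤ M) :
    |∫ s, f s ∂G| ≤ M := by
  simpa using norm_integral_le_of_norm_le_const (f := f) hf

lemma abs_integral_sub_sum_integral_mul_le {Ω ι : Type*} [MeasurableSpace Ω] [Fintype ι]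
    {G : Measure Ω} [IsProbabilityMeasure G] {f : Ω → ℝ} {c : ι → Ω → ℝ} {b : ι → ℝ} {δ : ℝ}
    (hf : Integrable f G) (hc : ∀ i, Integrable (c i) G)
    (hδ : ∀ᵐ s ∂G, |f s - ∑ i, c i s * b i| ≤ δ) :
    |∫ s, f s ∂G - ∑ i, (∫ s, c i s ∂G) * b i| ≤ δ := by
  have hcb : ∀ i ∈ Finset.univ, Integrable (fun s => c i s * b i) G := fun i _ =>
    (hc i).mul_const _
  have hsum : ∑ i, (∫ s, c i s ∂G) * b i = ∫ s, ∑ i, c i s * b i ∂G := by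
    rw [integral_finsetSum _ hcb]
    simp only [integral_mul_const]
  rw [hsum, ← integral_sub hf (integrable_finsetSum _ hcb)]
  exact abs_integral_le_of_ae_abs_le hδ

/-! ### Truncating the Poisson generating function -/

lemma hasSum_pow_mul_poissonMeasure_real (z : ℝ≥0) (u : ℝ) :
    HasSum (fun k : ℕ => u ^ k * (poissonMeasure z).real {k}) (Real.exp (z * (u - 1))) := by
  have hexp := (NormedSpace.expSeries_div_hasSum_exp (z * u : ℝ)).mul_left (Real.exp (-z))
  rw [← Real.exp_eq_exp_ℝ, ← Real.exp_add] at hexp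
  convert! hexp using 1
  · funext k
    rw [poissonMeasure_real_singleton, mul_pow]
    ring
  · congr 1
    ring

lemma abs_exp_sub_sum_poissonMeasure_le (z : ℝ≥0) {u : ℝ} (hu : |u| ≤ 1) (K : ℕ) :
    |Real.exp (z * (u - 1)) - ∑ k ∈ Finset.range K, u ^ k * (poissonMeasure z).real {k}|
      ≤ |u| ^ K := by
  set p : ℕ → ℝ := fun k => (poissonMeasure z).real {k}
  have hp : HasSum p 1 := by simpa using hasSum_pow_mul_poissonMeasure_real z 1
  have htail : HasSum (fun k => |u| ^ K * p (k + K)) (|u| ^ K * (1 - ∑ k ∈ Finset.range K, p k)) :=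
    ((hasSum_nat_add_iff' K).mpr hp).mul_left _
  rw [← ((hasSum_nat_add_iff' K).mpr (hasSum_pow_mul_poissonMeasure_real z u)).tsum_eq]
  calc |∑' k, u ^ (k + K) * p (k + K)| ≤ |u| ^ K * (1 - ∑ k ∈ Finset.range K, p k) := by
        rw [← Real.norm_eq_abs]
        refine tsum_of_norm_bounded htail fun k => ?_
        rw [norm_mul, norm_pow, Real.norm_eq_abs, Real.norm_of_nonneg measureReal_nonneg]
        exact mul_le_mul_of_nonneg_right
          (pow_le_pow_of_le_one (abs_nonneg u) hu (Nat.le_add_left K k)) measureReal_nonneg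
    _ ≤ |u| ^ K * 1 := by
        gcongr
        exact sub_le_self 1 (Finset.sum_nonneg fun k _ => measureReal_nonneg)
    _ = |u| ^ K := mul_one _

/-! ### Centered normal densities -/

lemma stdNormalPDF_eq_mul_exp (u : ℝ) :
    stdNormalPDF u = stdNormalPDF 0 * Real.exp (-u ^ 2 / 2) := by
  simp [stdNormalPDF, div_eq_inv_mul]

lemma stdNormalPDF_nonneg (u : ℝ) : 0 ≤ stdNormalPDF u := by
  unfold stdNormalPDF
  positivity

lemma stdNormalPDF_zero_le : stdNormalPDF 0 ≤ 2 / 5 := by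
  have hsqrt : 5 / 2 ≤ Real.sqrt (2 * Real.pi) :=
    Real.le_sqrt_of_sq_le (by linarith [Real.pi_gt_d2])
  calc stdNormalPDF 0 = (Real.sqrt (2 * Real.pi))⁻¹ := by simp [stdNormalPDF]
    _ ≤ (5 / 2)⁻¹ := by gcongr
    _ = 2 / 5 := by norm_num

lemma stdNormalPDF_le (u : ℝ) : stdNormalPDF u ≤ 2 / 5 := by
  rw [stdNormalPDF_eq_mul_exp]
  refine (mul_le_of_le_one_right (stdNormalPDF_nonneg 0) ?_).trans stdNormalPDF_zero_le
  exact Real.exp_le_one_iff.mpr (by linarith [sq_nonneg u])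

/-- The density at `x` of the centered normal law with standard deviation `s`, i.e. the kernel whose
mixtures over `s` form `mixClass0`. -/
noncomputable def normalScalePDF (s x : ℝ) : ℝ :=
  s⁻¹ * stdNormalPDF (x / s)

lemma mixDensity_zero (G : Measure ℝ) (x : ℝ) :
    mixDensity 0 G x = ∫ s, normalScalePDF s x ∂G := by
  simp only [mixDensity, normalScalePDF, one_div, sub_zero]

@[fun_prop]
lemma measurable_normalScalePDF (x : ℝ) : Measurable fun s => normalScalePDF s x := by
  unfold normalScalePDF stdNormalPDF
  fun_prop

lemma normalScalePDF_nonneg {s : ℝ} (hs : 0 ≤ s) (x : ℝ) : 0 ≤ normalScalePDF s x :=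
  mul_nonneg (inv_nonneg.mpr hs) (stdNormalPDF_nonneg _)

lemma normalScalePDF_le {a s : ℝ} (ha : 0 < a) (hs : a ≤ s) (x : ℝ) :
    normalScalePDF s x ≤ 2 / 5 * a⁻¹ :=
  calc s⁻¹ * stdNormalPDF (x / s) ≤ a⁻¹ * (2 / 5) :=
        mul_le_mul (inv_anti₀ ha hs) (stdNormalPDF_le _) (stdNormalPDF_nonneg _)
          (inv_nonneg.mpr ha.le)
    _ = 2 / 5 * a⁻¹ := mul_comm _ _

lemma normalScalePDF_eq_mul_normalScalePDF {t : ℝ} (ht : t ≠ 0) (s x : ℝ) :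
    normalScalePDF s x = t * normalScalePDF (t * s) (t * x) := by
  unfold normalScalePDF
  rw [mul_div_mul_left x s ht, mul_inv, ← mul_assoc, mul_inv_cancel_left₀ ht]

/-! ### Separating the scale from the point -/

/-- The scales whose precision `s⁻²` lies in the `j`-th cell of the geometric grid with ratio
`3 / 2` starting at `1`. The ratio makes the expansion parameter of `cellCoeff` at most `1 / 2`. -/
def precisionCell (j : ℕ) : Set ℝ :=
  {s | s⁻¹ ^ 2 ∈ Set.Ico ((3 / 2 : ℝ) ^ j) ((3 / 2) ^ (j + 1))}

/-- The scale-dependent factor of the `k`-th term in the Poisson expansion of `normalScalePDF` about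
the left end of `precisionCell j`; it vanishes off that cell. -/
noncomputable def cellCoeff (j k : ℕ) : ℝ → ℝ :=
  (precisionCell j).indicator fun s =>
    stdNormalPDF 0 * s⁻¹ * (1 - s⁻¹ ^ 2 / (3 / 2) ^ j) ^ k

/-- The rate of the Poisson law whose weights are the point-dependent factors of the expansion of
`normalScalePDF` about the left end of `precisionCell j`. -/
noncomputable def cellRate (j : ℕ) (x : ℝ) : ℝ≥0 :=
  (x ^ 2 * (3 / 2) ^ j / 2).toNNReal

lemma measurableSet_precisionCell (j : ℕ) : MeasurableSet (precisionCell j) :=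
  (by fun_prop : Measurable fun s : ℝ => s⁻¹ ^ 2) measurableSet_Ico

lemma pairwise_disjoint_precisionCell : Pairwise fun i j =>
    Disjoint (precisionCell i) (precisionCell j) := fun _ _ hij =>
  ((pow_right_mono₀ (by norm_num : (1 : ℝ) ≤ 3 / 2)).pairwise_disjoint_on_Ico_succ hij).preimage
    fun s : ℝ => s⁻¹ ^ 2

lemma exists_mem_precisionCell {s : ℝ} {J : ℕ} (h1 : 1 ≤ s⁻¹ ^ 2) (hJ : s⁻¹ ^ 2 < (3 / 2) ^ J) :
    ∃ j : Fin J, s ∈ precisionCell j := by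
  obtain ⟨j, hj⟩ := exists_nat_pow_near h1 (by norm_num : (1 : ℝ) < 3 / 2)
  have hjJ : j < J := (pow_lt_pow_iff_right₀ (by norm_num : (1 : ℝ) < 3 / 2)).mp (hj.1.trans_lt hJ)
  exact ⟨⟨j, hjJ⟩, hj⟩

lemma abs_one_sub_le_half_of_mem_precisionCell {s : ℝ} {j : ℕ} (hs : s ∈ precisionCell j) :
    |1 - s⁻¹ ^ 2 / (3 / 2) ^ j| ≤ 1 / 2 := by
  obtain ⟨hlower, hupper⟩ := hs
  have hpos : (0 : ℝ) < (3 / 2) ^ j := by positivity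
  have h1 : 1 ≤ s⁻¹ ^ 2 / (3 / 2) ^ j := (one_le_div hpos).mpr hlower
  have h2 : s⁻¹ ^ 2 / (3 / 2) ^ j ≤ 3 / 2 :=
    (div_le_iff₀ hpos).mpr (hupper.le.trans_eq (pow_succ' _ _))
  rw [abs_le]
  constructor <;> linarith

@[fun_prop]
lemma measurable_cellCoeff (j k : ℕ) : Measurable (cellCoeff j k) :=
  Measurable.indicator (by fun_prop) (measurableSet_precisionCell j)

lemma abs_cellCoeff_le {a s : ℝ} (ha : 0 < a) (hs : a ≤ s) (j k : ℕ) :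
    |cellCoeff j k s| ≤ 2 / 5 * a⁻¹ := by
  by_cases hj : s ∈ precisionCell j
  · have hs0 : 0 < s := ha.trans_le hs
    rw [cellCoeff, Set.indicator_of_mem hj, abs_mul, abs_mul, abs_pow,
      abs_of_nonneg (stdNormalPDF_nonneg 0), abs_of_pos (inv_pos.mpr hs0)]
    calc stdNormalPDF 0 * s⁻¹ * |1 - s⁻¹ ^ 2 / (3 / 2) ^ j| ^ k ≤ 2 / 5 * a⁻¹ * 1 := by
          gcongr
          · exact stdNormalPDF_zero_le
          · exact pow_le_one₀ (abs_nonneg _)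
              ((abs_one_sub_le_half_of_mem_precisionCell hj).trans (by norm_num))
      _ = 2 / 5 * a⁻¹ := mul_one _
  · rw [cellCoeff, Set.indicator_of_notMem hj, abs_zero]
    positivity

lemma normalScalePDF_eq_mul_exp_cellRate (j : ℕ) (s x : ℝ) :
    normalScalePDF s x = stdNormalPDF 0 * s⁻¹ *
      Real.exp (cellRate j x * ((1 - s⁻¹ ^ 2 / (3 / 2) ^ j) - 1)) := by
  have hexponent : -(x / s) ^ 2 / 2 =
      x ^ 2 * (3 / 2) ^ j / 2 * ((1 - s⁻¹ ^ 2 / (3 / 2) ^ j) - 1) := by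
    field_simp
    ring
  rw [normalScalePDF, stdNormalPDF_eq_mul_exp, cellRate, Real.coe_toNNReal _ (by positivity),
    hexponent]
  ring

lemma abs_normalScalePDF_sub_sum_range_le {s : ℝ} {j : ℕ} (hs : 0 < s) (hj : s ∈ precisionCell j)
    (K : ℕ) (x : ℝ) :
    |normalScalePDF s x -
        ∑ k ∈ Finset.range K, cellCoeff j k s * (poissonMeasure (cellRate j x)).real {k}|
      ≤ 2 / 5 * (s⁻¹ * (1 / 2) ^ K) := by
  set u := 1 - s⁻¹ ^ 2 / (3 / 2) ^ j with hu
  have hu2 : |u| ≤ 1 / 2 := abs_one_sub_le_half_of_mem_precisionCell hj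
  have hsum : ∑ k ∈ Finset.range K, cellCoeff j k s * (poissonMeasure (cellRate j x)).real {k} =
      stdNormalPDF 0 * s⁻¹ *
        ∑ k ∈ Finset.range K, u ^ k * (poissonMeasure (cellRate j x)).real {k} := by
    rw [Finset.mul_sum]
    refine Finset.sum_congr rfl fun k _ => ?_
    rw [cellCoeff, Set.indicator_of_mem hj, mul_assoc _ (u ^ k)]
  have hK := abs_exp_sub_sum_poissonMeasure_le (cellRate j x) (hu2.trans (by norm_num)) K
  have hv : 0 ≤ stdNormalPDF 0 * s⁻¹ := mul_nonneg (stdNormalPDF_nonneg 0) (inv_nonneg.mpr hs.le)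
  rw [hsum, normalScalePDF_eq_mul_exp_cellRate j, ← hu, ← mul_sub, abs_mul, abs_of_nonneg hv]
  calc _ ≤ stdNormalPDF 0 * s⁻¹ * |u| ^ K := by gcongr
    _ ≤ 2 / 5 * s⁻¹ * (1 / 2) ^ K := by
        gcongr
        exact stdNormalPDF_zero_le
    _ = 2 / 5 * (s⁻¹ * (1 / 2) ^ K) := mul_assoc _ _ _

lemma sum_cellCoeff_mul_of_mem {s : ℝ} {J K : ℕ} {j : Fin J} (hj : s ∈ precisionCell j)
    (b : ℕ → ℕ → ℝ) :
    ∑ i : Fin J × Fin K, cellCoeff i.1 i.2 s * b i.1 i.2 =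
      ∑ k ∈ Finset.range K, cellCoeff j k s * b j k := by
  rw [Fintype.sum_prod_type, Finset.sum_eq_single_of_mem j (Finset.mem_univ j),
    ← Fin.sum_univ_eq_sum_range (fun k => cellCoeff j k s * b j k)]
  intro j' _ hne
  have hj' : s ∉ precisionCell j' := Set.disjoint_left.mp
    (pairwise_disjoint_precisionCell (Fin.val_ne_of_ne hne.symm)) hj
  simp only [cellCoeff, Set.indicator_of_notMem hj', zero_mul, Finset.sum_const_zero]

lemma cellCoeff_eq_zero_of_lt_one {s : ℝ} (hs : s⁻¹ ^ 2 < 1) (j k : ℕ) : cellCoeff j k s = 0 :=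
  Set.indicator_of_notMem
    (fun hj => (hs.trans_le (one_le_pow₀ (by norm_num : (1 : ℝ) ≤ 3 / 2))).not_ge hj.1) _

lemma abs_normalScalePDF_sub_sum_le {s : ℝ} {J K : ℕ} (hs : 0 < s) (hJ : s⁻¹ ^ 2 < (3 / 2) ^ J)
    (hK : s⁻¹ ≤ 2 ^ K) (x : ℝ) :
    |normalScalePDF s x - ∑ i : Fin J × Fin K,
        cellCoeff i.1 i.2 s * (poissonMeasure (cellRate i.1 x)).real {(i.2 : ℕ)}| ≤ 2 / 5 := by
  by_cases h1 : s⁻¹ ^ 2 < 1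
  · have hs1 : 1 ≤ s := by
      rw [pow_lt_one_iff_of_nonneg (inv_nonneg.mpr hs.le) two_ne_zero] at h1
      exact ((inv_lt_one₀ hs).mp h1).le
    simp only [cellCoeff_eq_zero_of_lt_one h1, zero_mul, Finset.sum_const_zero, sub_zero]
    rw [abs_of_nonneg (normalScalePDF_nonneg hs.le x)]
    simpa using normalScalePDF_le one_pos hs1 x
  · obtain ⟨j, hj⟩ := exists_mem_precisionCell (not_lt.mp h1) hJ
    rw [sum_cellCoeff_mul_of_mem hj fun j k => (poissonMeasure (cellRate j x)).real {k}]
    calc _ ≤ 2 / 5 * (s⁻¹ * (1 / 2) ^ K) := abs_normalScalePDF_sub_sum_range_le hs hj K x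
      _ ≤ 2 / 5 * (2 ^ K * (1 / 2) ^ K) := by gcongr
      _ = 2 / 5 := by rw [← mul_pow]; norm_num

/-! ### Covering scale mixtures -/

lemma IsPriorOn.ae_le {a b : ℝ} {G : Measure ℝ} (hG : IsPriorOn a b G) : ∀ᵐ s ∂G, a ≤ s := by
  have hmem : ∀ᵐ s ∂G, s ∈ Set.Icc a b := mem_ae_iff.mpr hG.2
  filter_upwards [hmem] with s hs using hs.1

lemma IsPriorOn.map_mul_left {a b t : ℝ} {G : Measure ℝ} (hG : IsPriorOn a b G) (ht : 0 < t) :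
    IsPriorOn (t * a) (t * b) (G.map (t * ·)) := by
  have := hG.1
  refine ⟨Measure.isProbabilityMeasure_map (by fun_prop), ?_⟩
  rw [Measure.map_apply (by fun_prop) measurableSet_Icc.compl, Set.preimage_compl,
    Set.preimage_const_mul_Icc₀ _ _ ht, mul_div_cancel_left₀ a ht.ne',
    mul_div_cancel_left₀ b ht.ne']
  exact hG.2

lemma mixDensity_zero_eq_mul_mixDensity_map {t : ℝ} (ht : t ≠ 0) (G : Measure ℝ) (x : ℝ) :
    mixDensity 0 G x = t * mixDensity 0 (G.map (t * ·)) (t * x) := by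
  rw [mixDensity_zero, mixDensity_zero,
    integral_map (by fun_prop) (measurable_normalScalePDF _).aestronglyMeasurable,
    ← integral_const_mul]
  simp only [← normalScalePDF_eq_mul_normalScalePDF ht]

lemma coveringNum_mul_mixClass0_le {a b t ε : ℝ} (ht : 0 < t) :
    coveringNum (t * ε) (mixClass0 a b) Set.univ ≤
      coveringNum ε (mixClass0 (t * a) (t * b)) Set.univ := by
  refine coveringNum_le_coveringNum_of_transfer (fun g x => t * g (t * x)) ?_
  rintro _ ⟨G, hG, rfl⟩
  refine ⟨_, ⟨_, hG.map_mul_left ht, rfl⟩, fun g hg x _ => ?_⟩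
  rw [mixDensity_zero_eq_mul_mixDensity_map ht.ne', ← mul_sub, abs_mul, abs_of_pos ht]
  gcongr
  exact hg (t * x) (Set.mem_univ _)

lemma IsPriorOn.integrable_normalScalePDF {a b : ℝ} {G : Measure ℝ} (hG : IsPriorOn a b G)
    (ha : 0 < a) (x : ℝ) : Integrable (fun s => normalScalePDF s x) G := by
  have := hG.1
  refine .of_bound (by fun_prop) (2 / 5 * a⁻¹) ?_
  filter_upwards [hG.ae_le] with s hs
  rw [Real.norm_of_nonneg (normalScalePDF_nonneg (ha.le.trans hs) x)]
  exact normalScalePDF_le ha hs x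

lemma IsPriorOn.mixDensity_zero_mem_Icc {a b : ℝ} {G : Measure ℝ} (hG : IsPriorOn a b G)
    (ha : 0 < a) (x : ℝ) : mixDensity 0 G x ∈ Set.Icc 0 (2 / 5 * a⁻¹) := by
  have := hG.1
  rw [mixDensity_zero]
  constructor
  · apply integral_nonneg_of_ae
    filter_upwards [hG.ae_le] with s hs using normalScalePDF_nonneg (ha.le.trans hs) x
  · have hle : ∀ᵐ s ∂G, normalScalePDF s x ≤ 2 / 5 * a⁻¹ := by
      filter_upwards [hG.ae_le] with s hs using normalScalePDF_le ha hs x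
    simpa using integral_mono_ae (hG.integrable_normalScalePDF ha x) (integrable_const _) hle

lemma coveringNum_one_mixClass0_le_one {a : ℝ} (ha : 1 / 5 ≤ a) (b : ℝ) :
    coveringNum 1 (mixClass0 a b) Set.univ ≤ 1 := by
  refine (coveringNum_le_card {fun _ => 1} ?_).trans (by simp)
  rintro _ ⟨G, hG, rfl⟩
  refine ⟨_, Finset.mem_singleton_self _, fun x _ => ?_⟩
  obtain ⟨hlower, hupper⟩ := hG.mixDensity_zero_mem_Icc (by linarith) x
  have hinv : a⁻¹ ≤ (1 / 5)⁻¹ := inv_anti₀ (by norm_num) ha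
  rw [abs_le]
  constructor <;> linarith

lemma IsPriorOn.integrable_cellCoeff {a b : ℝ} {G : Measure ℝ} (hG : IsPriorOn a b G)
    (ha : 0 < a) (j k : ℕ) : Integrable (cellCoeff j k) G := by
  have := hG.1
  refine .of_bound (by fun_prop) (2 / 5 * a⁻¹) ?_
  filter_upwards [hG.ae_le] with s hs using abs_cellCoeff_le ha hs j k

lemma IsPriorOn.abs_integral_cellCoeff_le {a b : ℝ} {G : Measure ℝ} (hG : IsPriorOn a b G)
    (ha : 0 < a) (j k : ℕ) : |∫ s, cellCoeff j k s ∂G| ≤ 2 / 5 * a⁻¹ := by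
  have := hG.1
  refine abs_integral_le_of_ae_abs_le ?_
  filter_upwards [hG.ae_le] with s hs using abs_cellCoeff_le ha hs j k

lemma coveringNum_one_mixClass0_le_pow {a : ℝ} {J K R : ℕ} (ha : 0 < a) (hJK : 0 < J * K)
    (hJ : a⁻¹ ^ 2 < (3 / 2) ^ J) (hK : a⁻¹ ≤ 2 ^ K) (hR : 2 / 5 * a⁻¹ * (J * K) ≤ R) (b : ℝ) :
    coveringNum 1 (mixClass0 a b) Set.univ ≤ (2 * R + 1) ^ (J * K) := by
  have hJKpos : (0 : ℝ) < J * K := by exact_mod_cast hJK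
  have hcard : Fintype.card (Fin J × Fin K) = J * K := by simp
  rw [← hcard]
  refine coveringNum_le_pow_of_approx (δ := 2 / 5) (η := (J * K : ℝ)⁻¹)
    (b := fun i x => (poissonMeasure (cellRate i.1 x)).real {(i.2 : ℕ)}) (inv_pos.mpr hJKpos)
    (fun i x _ => ?_) ?_ ?_
  · rw [abs_of_nonneg measureReal_nonneg]
    exact measureReal_le_one
  · rintro _ ⟨G, hG, rfl⟩
    have := hG.1
    refine ⟨fun i => ∫ s, cellCoeff i.1 i.2 s ∂G, fun i => ?_, fun x _ => ?_⟩
    · rw [← div_eq_mul_inv, le_div_iff₀ hJKpos]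
      exact (mul_le_mul_of_nonneg_right (hG.abs_integral_cellCoeff_le ha _ _) hJKpos.le).trans hR
    · rw [mixDensity_zero]
      refine abs_integral_sub_sum_integral_mul_le (hG.integrable_normalScalePDF ha x)
        (fun i => hG.integrable_cellCoeff ha _ _) ?_
      filter_upwards [hG.ae_le] with s hs
      have hs0 : 0 < s := ha.trans_le hs
      have hinv : s⁻¹ ≤ a⁻¹ := inv_anti₀ ha hs
      exact abs_normalScalePDF_sub_sum_le hs0
        ((pow_le_pow_left₀ (inv_nonneg.mpr hs0.le) hinv 2).trans_lt hJ) (hinv.trans hK) x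
  · rw [hcard, Nat.cast_mul]
    have hhalf : (J * K : ℝ) * ((J * K : ℝ)⁻¹ / 2) = 1 / 2 := by
      rw [mul_div_assoc', mul_inv_cancel₀ hJKpos.ne']
    rw [hhalf]
    norm_num

/-! ### The entropy bound -/

lemma two_mul_sq_mul_three_pow_add_one_le_exp {n : ℕ} (hn : 1 ≤ n) :
    2 * (5 * n ^ 2 * 3 ^ n) + 1 ≤ Real.exp (5 * n) := by
  have hn' : (1 : ℝ) ≤ n := by exact_mod_cast hn
  have hsq : (n : ℝ) ^ 2 ≤ 4 ^ n := by
    have hlt : (n : ℝ) ≤ 2 ^ n := by exact_mod_cast n.lt_two_pow_self.le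
    calc (n : ℝ) ^ 2 ≤ (2 ^ n) ^ 2 := by gcongr
      _ = 4 ^ n := by rw [pow_right_comm]; norm_num
  have hone : 1 ≤ (n : ℝ) ^ 2 * 3 ^ n :=
    one_le_mul_of_one_le_of_one_le (one_le_pow₀ hn') (one_le_pow₀ (by norm_num))
  calc 2 * (5 * (n : ℝ) ^ 2 * 3 ^ n) + 1 ≤ 11 * (n ^ 2 * 3 ^ n) := by linarith
    _ ≤ 11 ^ n * (4 ^ n * 3 ^ n) := by
        gcongr
        exact le_self_pow₀ (by norm_num) (by omega)
    _ = 132 ^ n := by rw [← mul_pow, ← mul_pow]; norm_num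
    _ ≤ (2.7 ^ 5) ^ n := by gcongr; norm_num
    _ ≤ (Real.exp 1 ^ 5) ^ n := by gcongr; linarith [Real.exp_one_gt_d9]
    _ = Real.exp (5 * n) := by rw [← pow_mul, ← Real.exp_nat_mul]; push_cast; ring_nf

lemma coveringNum_one_mixClass0_le_exp {a : ℝ} {n : ℕ} (ha : 0 < a) (hn : 1 ≤ n)
    (han : a⁻¹ ≤ 3 ^ n) (b : ℝ) :
    coveringNum 1 (mixClass0 a b) Set.univ ≤ ENNReal.ofReal (Real.exp (60 * n ^ 3)) := by
  have hJ : a⁻¹ ^ 2 < (3 / 2) ^ (6 * n) :=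
    calc a⁻¹ ^ 2 ≤ (3 ^ n) ^ 2 := by gcongr
      _ = 9 ^ n := by rw [pow_right_comm]; norm_num
      _ < ((3 / 2) ^ 6) ^ n := pow_lt_pow_left₀ (by norm_num) (by norm_num) (by omega)
      _ = (3 / 2) ^ (6 * n) := (pow_mul _ _ _).symm
  have hK : a⁻¹ ≤ 2 ^ (2 * n) :=
    calc a⁻¹ ≤ 3 ^ n := han
      _ ≤ (2 ^ 2) ^ n := by gcongr; norm_num
      _ = 2 ^ (2 * n) := (pow_mul _ _ _).symm
  have hR : 2 / 5 * a⁻¹ * ((6 * n : ℕ) * (2 * n : ℕ)) ≤ (5 * n ^ 2 * 3 ^ n : ℕ) := by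
    push_cast
    calc 2 / 5 * a⁻¹ * (6 * n * (2 * n)) = 24 / 5 * n ^ 2 * a⁻¹ := by ring
      _ ≤ 5 * n ^ 2 * 3 ^ n := by gcongr; norm_num
  refine (coveringNum_one_mixClass0_le_pow ha (by positivity) hJ hK hR b).trans ?_
  have hexp : (2 * (5 * n ^ 2 * 3 ^ n : ℕ) + 1 : ℝ) ^ (6 * n * (2 * n)) ≤
      Real.exp (60 * n ^ 3) :=
    calc _ ≤ Real.exp (5 * n) ^ (6 * n * (2 * n)) := by
          gcongr
          exact_mod_cast two_mul_sq_mul_three_pow_add_one_le_exp hn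
      _ = Real.exp (60 * n ^ 3) := by
          rw [← Real.exp_nat_mul]
          push_cast
          ring_nf
  refine le_trans (le_of_eq ?_) (ENNReal.ofReal_le_ofReal hexp)
  exact_mod_cast (ENNReal.ofReal_natCast _).symm

lemma coveringNum_one_mixClass0_le_exp_log {a : ℝ} (ha : 0 < a) (hlog : 1 ≤ Real.log (1 / a))
    (b : ℝ) :
    coveringNum 1 (mixClass0 a b) Set.univ ≤
      ENNReal.ofReal (Real.exp (480 * Real.log (1 / a) ^ 3)) := by
  set L := Real.log (1 / a) with hL
  have hn : 1 ≤ ⌈L⌉₊ := Nat.one_le_ceil_iff.mpr (by linarith)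
  have han : a⁻¹ ≤ 3 ^ ⌈L⌉₊ :=
    calc a⁻¹ = Real.exp L := by rw [hL, Real.exp_log (by positivity), one_div]
      _ ≤ Real.exp ⌈L⌉₊ := Real.exp_le_exp.mpr (Nat.le_ceil L)
      _ = Real.exp 1 ^ ⌈L⌉₊ := by rw [← Real.exp_nat_mul, mul_one]
      _ ≤ 3 ^ ⌈L⌉₊ := by gcongr; exact Real.exp_one_lt_three.le
  have hceil : (⌈L⌉₊ : ℝ) ≤ 2 * L := by linarith [Nat.ceil_lt_add_one (by linarith : 0 ≤ L)]
  refine (coveringNum_one_mixClass0_le_exp ha hn han b).trans (ENNReal.ofReal_le_ofReal ?_)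
  refine Real.exp_le_exp.mpr ?_
  calc 60 * (⌈L⌉₊ : ℝ) ^ 3 ≤ 60 * (2 * L) ^ 3 := by gcongr
    _ = 480 * L ^ 3 := by ring

lemma three_halves_le_log_one_div {a : ℝ} (ha : 0 < a) (ha5 : a ≤ 1 / 5) :
    3 / 2 ≤ Real.log (1 / a) :=
  calc 3 / 2 ≤ Real.log 5 := by linarith [Real.log_five_gt_d9]
    _ ≤ Real.log (1 / a) := Real.log_le_log (by norm_num) ((le_one_div (by norm_num) ha).mpr ha5)

lemma one_third_le_log {x : ℝ} (hx : 3 / 2 ≤ x) : 1 / 3 ≤ Real.log x := by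
  have hinv : x⁻¹ ≤ (3 / 2)⁻¹ := inv_anti₀ (by norm_num) hx
  linarith [Real.one_sub_inv_le_log_of_pos (by linarith : 0 < x)]

-- Any power of `log log` is allowed because the one place where it degenerates,
-- `1 / (ε σmin)` near `e`, lies in the range where a single ball covers the class.
theorem stmt15_general (p : ℕ) :
    ∃ C : ℝ, 0 < C ∧ ∀ σmin σmax ε : ℝ, 0 < σmin → 0 < ε → ε * σmin < 1 →
      coveringNum ε (mixClass0 σmin σmax) Set.univ ≤
        ENNReal.ofReal (Real.exp (C * Real.log (1 / (ε * σmin)) ^ 3 *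
          |Real.log (Real.log (1 / (ε * σmin)))| ^ p)) := by
  refine ⟨480 * 3 ^ p, by positivity, fun σmin σmax ε hσ hε hlt => ?_⟩
  have ha : 0 < ε * σmin := mul_pos hε hσ
  have hscale := coveringNum_mul_mixClass0_le (a := σmin) (b := σmax) (ε := 1) hε
  rw [mul_one] at hscale
  refine hscale.trans ?_
  obtain h5 | h5 := le_total (1 / 5) (ε * σmin)
  · have hL : 0 < Real.log (1 / (ε * σmin)) := Real.log_pos (one_lt_one_div ha hlt)
    refine (coveringNum_one_mixClass0_le_one h5 _).trans (ENNReal.one_le_ofReal.mpr ?_)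
    exact Real.one_le_exp (by positivity)
  · have hL := three_halves_le_log_one_div ha h5
    refine (coveringNum_one_mixClass0_le_exp_log ha (by linarith) _).trans
      (ENNReal.ofReal_le_ofReal (Real.exp_le_exp.mpr ?_))
    set L := Real.log (1 / (ε * σmin))
    calc 480 * L ^ 3 = 480 * 3 ^ p * L ^ 3 * (1 / 3) ^ p := by
          rw [one_div, inv_pow]
          field_simp
      _ ≤ 480 * 3 ^ p * L ^ 3 * |Real.log L| ^ p := by
          gcongr
          exact (one_third_le_log hL).trans (le_abs_self _)

/-- Lemma `lemma:step-I`. Sup-norm covering entropy bound for the class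
of centered normal scale mixtures with `σmin ≤ 1 ≤ σmax`:
`log N(ε, 𝒫₀, L_∞(ℝ)) ≤ C log³(1/(ε σmin)) log⁴ log(1/(ε σmin))`, stated as a bound on
the covering number itself; in particular the bound does not depend on `σmax`. -/
theorem stmt15 :
    ∃ C : ℝ, 0 < C ∧
      ∀ σmin σmax ε : ℝ,
        0 < σmin → σmin ≤ 1 → 1 ≤ σmax →
        ε ∈ Set.Ioo (0 : ℝ) (1 / 2) →
        coveringNum ε (mixClass0 σmin σmax) Set.univ ≤
          ENNReal.ofReal (Real.exp
            (C * (Real.log (1 / (ε * σmin))) ^ 3 *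
              (Real.log (Real.log (1 / (ε * σmin)))) ^ 4)) := by
  obtain ⟨C, hC, hcover⟩ := stmt15_general 4
  refine ⟨C, hC, fun σmin σmax ε hσ hσ1 _ hε => ?_⟩
  simpa only [Even.pow_abs (by decide : Even 4)] using
    hcover σmin σmax ε hσ hε.1 (by nlinarith [hε.1, hε.2])
end

section
/- Let m ∈ ℕ, let x_1,…,x_m be nonzero real numbers with pairwise distinct absolute values, and let σ_1,…,σ_m be pairwise distinct positive reals. Then the m×m matrix B with entries B_{ij} = φ(x_i/σ_j), where φ is the standard normal density, is nonsingular. -/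
/-!
For distinct `e j` and nonzero coefficients, `t ↦ ∑ j ∈ s, c j * exp (e j * t)` has fewer than
`#s` real zeros: dividing by one of the exponentials turns that term into a constant, which
differentiation removes, and by Rolle's theorem this loses at most one zero. Now `φ (x i / σ j)` is
a constant times `exp (y i * e j)` with `y i = -x i ^ 2 / 2` and `e j = (σ j ^ 2)⁻¹`, so a nonzero
kernel vector of `B` would be the coefficients of such a sum vanishing at all the points `y i`.
-/

theorem encard_preimage_singleton_le_encard_deriv_eq_zero_add_one {f : ℝ → ℝ}
    (hf : Continuous f) (c : ℝ) : (f ⁻¹' {c}).encard ≤ {t | deriv f t = 0}.encard + 1 := by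
  rcases {t | deriv f t = 0}.finite_or_infinite with hfin | hinf
  · by_contra! hlt
    obtain ⟨s, hs, hs_card⟩ := Set.exists_subset_encard_eq (Order.add_one_le_of_lt hlt)
    rw [hfin.encard_eq_coe_toFinset_card] at hs_card
    lift s to Finset ℝ using Set.finite_of_encard_eq_coe (k := hfin.toFinset.card + 2) hs_card
    have card_le : s.card ≤ hfin.toFinset.card + 1 := by
      refine Finset.card_le_of_interleaved fun a ha b hb hab _ => ?_
      obtain ⟨t, ht, deriv_t⟩ :=
        exists_deriv_eq_zero hab hf.continuousOn ((hs ha).trans (hs hb).symm)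
      exact ⟨t, hfin.mem_toFinset.2 deriv_t, ht⟩
    rw [Set.encard_coe_eq_coe_finsetCard] at hs_card
    norm_cast at hs_card
    lia
  · simp [hinf.encard_eq]

theorem hasDerivAt_sum_mul_exp {ι : Type*} (s : Finset ι) (c e : ι → ℝ) (t : ℝ) :
    HasDerivAt (fun t => ∑ j ∈ s, c j * Real.exp (e j * t))
      (∑ j ∈ s, c j * e j * Real.exp (e j * t)) t := by
  refine HasDerivAt.fun_sum fun j _ => ?_
  exact (((hasDerivAt_const_mul (e j)).exp).const_mul (c j)).congr_deriv (by ring)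

theorem sum_mul_exp_eq_exp_mul_sum_sub {ι : Type*} (s : Finset ι) (c e : ι → ℝ) (a t : ℝ) :
    ∑ j ∈ s, c j * Real.exp (e j * t) =
      Real.exp (a * t) * ∑ j ∈ s, c j * Real.exp ((e j - a) * t) := by
  simp only [Finset.mul_sum, mul_left_comm (Real.exp _), ← Real.exp_add, ← add_mul,
    add_sub_cancel]

theorem encard_sum_mul_exp_eq_zero_lt_card {ι : Type*} {s : Finset ι} (hs : s.Nonempty)
    {c e : ι → ℝ} (hc : ∀ j ∈ s, c j ≠ 0) (he : Set.InjOn e s) :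
    {t | ∑ j ∈ s, c j * Real.exp (e j * t) = 0}.encard < s.card := by
  induction hs using Finset.Nonempty.cons_induction generalizing c e with
  | singleton b => simp [hc b (Finset.mem_singleton_self b)]
  | cons b s hb _ ih =>
    rw [Finset.coe_cons, Set.injOn_insert (by exact_mod_cast hb)] at he
    obtain ⟨he, heb⟩ := he
    let g : ℝ → ℝ := fun t => ∑ j ∈ s, c j * Real.exp ((e j - e b) * t)
    have zeros_eq : {t | ∑ j ∈ s.cons b hb, c j * Real.exp (e j * t) = 0} = g ⁻¹' {-c b} := by
      ext t
      rw [Set.mem_ofPred_eq, sum_mul_exp_eq_exp_mul_sum_sub _ _ _ (e b)]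
      simp [g, Real.exp_ne_zero, add_comm (c b), add_eq_zero_iff_eq_neg]
    have hasDerivAt_g (t : ℝ) :
        HasDerivAt g (∑ j ∈ s, c j * (e j - e b) * Real.exp ((e j - e b) * t)) t :=
      hasDerivAt_sum_mul_exp s c (fun j => e j - e b) t
    have deriv_zeros_lt : {t | deriv g t = 0}.encard < s.card := by
      simp only [(hasDerivAt_g _).deriv]
      refine ih (fun j hj => mul_ne_zero (hc j (Finset.mem_cons_of_mem hj)) ?_) ?_
      · exact sub_ne_zero.2 fun h => heb ⟨j, hj, h⟩
      · exact fun i hi j hj hij => he hi hj (sub_left_injective hij)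
    have g_cont : Continuous g := by fun_prop
    rw [zeros_eq]
    calc (g ⁻¹' {-c b}).encard
        ≤ {t | deriv g t = 0}.encard + 1 :=
          encard_preimage_singleton_le_encard_deriv_eq_zero_add_one g_cont _
      _ ≤ s.card := Order.add_one_le_of_lt deriv_zeros_lt
      _ < (s.cons b hb).card := by
        exact_mod_cast Finset.card_lt_card (Finset.ssubset_cons hb)

theorem det_exp_mul_ne_zero {n : Type*} [Fintype n] [DecidableEq n] {y e : n → ℝ}
    (hy : Function.Injective y) (he : Function.Injective e) :
    (Matrix.of fun i j => Real.exp (y i * e j)).det ≠ 0 := by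
  intro hdet
  obtain ⟨v, hv, hker⟩ := Matrix.exists_mulVec_eq_zero_iff.2 hdet
  let s := Finset.univ.filter fun j => v j ≠ 0
  have hs : s.Nonempty := by
    obtain ⟨j, hj⟩ := Function.ne_iff.1 hv
    exact ⟨j, by simpa [s] using hj⟩
  have range_subset : Set.range y ⊆ {t | ∑ j ∈ s, v j * Real.exp (e j * t) = 0} := by
    rintro _ ⟨i, rfl⟩
    have hi : ∑ j, v j * Real.exp (e j * y i) = 0 := by
      simpa [Matrix.mulVec, dotProduct, mul_comm] using congrFun hker i
    refine (Finset.sum_subset s.subset_univ fun j _ hj => ?_).trans hi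
    simp_all [s]
  have card_lt : (Fintype.card n : ℕ∞) < Fintype.card n :=
    calc (Fintype.card n : ℕ∞)
        ≤ (Set.range y).encard := by simpa using hy.encard_range
      _ ≤ {t | ∑ j ∈ s, v j * Real.exp (e j * t) = 0}.encard := Set.encard_le_encard range_subset
      _ < s.card := encard_sum_mul_exp_eq_zero_lt_card hs (by simp [s]) he.injOn
      _ ≤ Fintype.card n := by exact_mod_cast s.card_le_univ
  exact card_lt.false

theorem stdNormalPDF_div (u a : ℝ) :
    stdNormalPDF (u / a) = (√(2 * Real.pi))⁻¹ * Real.exp (-u ^ 2 / 2 * (a ^ 2)⁻¹) := by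
  rw [stdNormalPDF, div_eq_inv_mul]
  ring_nf

/-- from the proof of Lemma 11. If `x₁, …, x_m` are nonzero reals with
pairwise distinct absolute values and `σ₁, …, σ_m` are pairwise distinct positive reals,
then the matrix `B` with `B i j = φ(x i / σ j)` is nonsingular. -/
theorem stmt18 (m : ℕ) (x σ : Fin m → ℝ)
    (hx : ∀ i, x i ≠ 0)
    (habs : ∀ i j, |x i| = |x j| → i = j)
    (hσpos : ∀ j, 0 < σ j)
    (hσinj : Function.Injective σ) :
    (Matrix.of fun i j : Fin m => stdNormalPDF (x i / σ j)).det ≠ 0 := by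
  have hy : Function.Injective fun i => -x i ^ 2 / 2 := fun i j hij =>
    habs i j (sq_eq_sq_iff_abs_eq_abs _ _ |>.1 (by simpa using hij))
  have he : Function.Injective fun j => (σ j ^ 2)⁻¹ := fun i j hij =>
    hσinj ((sq_eq_sq₀ (hσpos i).le (hσpos j).le).1 (inv_injective hij))
  have factor : (Matrix.of fun i j : Fin m => stdNormalPDF (x i / σ j)) =
      (√(2 * Real.pi))⁻¹ • Matrix.of fun i j => Real.exp (-x i ^ 2 / 2 * (σ j ^ 2)⁻¹) := by
    ext i j
    exact stdNormalPDF_div (x i) (σ j)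
  rw [factor, Matrix.det_smul]
  exact mul_ne_zero (pow_ne_zero _ (by positivity)) (det_exp_mul_ne_zero hy he)
end
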